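/- arXiv:1506.08484 — 2 statements merged into one kernel-verified Lean document; each statement's English description precedes it below -/
import Mathlib

section
/- Suppose 𝑝̃ has exactly two maximizers m₁ < m₂ on [0,1], each satisfying m_ℓ = g(τ(m_ℓ)) and 𝑝̃''(m_ℓ) < 0 (i.e. (J,h) lies on the critical line Γ). Fix ξ ∈ (m₁,m₂), set 𝒟₁ = {D ∈ 𝓓 : m(D) < ξ} and 𝒟₂ = {D ∈ 𝓓 : m(D) > ξ}, and assume liminf_{N→∞} ℙ(𝒟_ℓ) > 0 for ℓ = 1,2. Then for each ℓ ∈ {1,2}, λ_ℓ := −1/𝑝̃''(m_ℓ) − 1/(2J) > 0 and there exists a constant K (independent of N) such that for all N ≥ 1, sup_{z∈ℝ} |ℙ((|𝓜(D)| − N·m_ℓ)/N^{1/2} ≤ z | 𝒟_ℓ) − ℙ(X_ℓ ≤ z)| ≤ K/N^{1/2}, where X_ℓ is a centered Gaussian random variable with variance λ_ℓ. -/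
open Real Finset MeasureTheory

noncomputable section

/-- Dimer configurations (matchings of the complete graph on `Fin N`), encoded as
involutions of `Fin N`: fixed points are monomers, 2-cycles are dimers. -/
abbrev Dimer (N : ℕ) := {f : Fin N → Fin N // ∀ i, f (f i) = i}

/-- The set of monomers (dimer-free vertices) of a dimer configuration. -/
def monomers {N : ℕ} (D : Dimer N) : Finset (Fin N) :=
  Finset.univ.filter fun i => D.1 i = i

/-- Monomer density `m(D) = |𝓜(D)|/N`. -/
def mDim {N : ℕ} (D : Dimer N) : ℝ := ((monomers D).card : ℝ) / N

/-- The parameter `b = (log N)/2 + h - J`. -/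
def bIMD (N : ℕ) (J h : ℝ) : ℝ := Real.log N / 2 + h - J

/-- The Gibbs weight `exp(-H(D)) = exp(N (a m(D)^2 + b m(D)))` with `a = J`. -/
def wDim (N : ℕ) (J h : ℝ) (D : Dimer N) : ℝ :=
  Real.exp (N * (J * mDim D ^ 2 + bIMD N J h * mDim D))

/-- The probability of an event `A` under the IMD Gibbs measure. -/
def probDim (N : ℕ) (J h : ℝ) (A : Dimer N → Prop) : ℝ :=
  (∑ D : Dimer N, Set.indicator {D | A D} (wDim N J h) D) / ∑ D : Dimer N, wDim N J h D

/-- The conditional probability `ℙ(A | B)` under the IMD Gibbs measure. -/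
def condProbDim (N : ℕ) (J h : ℝ) (A B : Dimer N → Prop) : ℝ :=
  (∑ D : Dimer N, Set.indicator {D | A D ∧ B D} (wDim N J h) D) /
    ∑ D : Dimer N, Set.indicator {D | B D} (wDim N J h) D

/-- `g(x) = (√(e^{4x} + 4 e^{2x}) - e^{2x})/2`. -/
def gFun (x : ℝ) : ℝ := (Real.sqrt (Real.exp (4*x) + 4 * Real.exp (2*x)) - Real.exp (2*x)) / 2

/-- `τ(x) = (2x-1)J + h`. -/
def tauFun (J h x : ℝ) : ℝ := (2*x - 1) * J + h

/-- `𝑝̃(m) = -J m² - (1 - g(τ(m)) + log(1 - g(τ(m))))/2`. -/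
def ptilde (J h m : ℝ) : ℝ :=
  -J * m^2 - (1 - gFun (tauFun J h m) + Real.log (1 - gFun (tauFun J h m))) / 2

/-- The CDF of a centered Gaussian with variance `v`, evaluated at `z`. -/
def gaussCDF (v : ℝ) (z : ℝ) : ℝ :=
  (ProbabilityTheory.gaussianReal 0 (Real.toNNReal v) (Set.Iic z)).toReal

/-- Spin configurations `Σ = {0,1}^N`. -/
abbrev Config (N : ℕ) := Fin N → Bool

/-- `𝓐(σ) = {i : σ_i = 1}`. -/
def ASet {N : ℕ} (σ : Config N) : Finset (Fin N) := Finset.univ.filter fun i => σ i = true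

/-- `M(σ) = ∑ σ_i`. -/
def Msum {N : ℕ} (σ : Config N) : ℕ := (ASet σ).card

/-- Magnetization `m(σ) = M(σ)/N`. -/
def mConf {N : ℕ} (σ : Config N) : ℝ := (Msum σ : ℝ) / N

/-- `D(σ)`: the number of dimer configurations `D` with `𝓜(D) = 𝓐(σ)`. -/
def Dcount (N : ℕ) (σ : Config N) : ℕ :=
  (Finset.univ.filter fun D : Dimer N => monomers D = ASet σ).card

/-- The weight `D(σ) exp(-H(σ))` of the weighted Curie–Weiss model. -/
def wConf (N : ℕ) (J h : ℝ) (σ : Config N) : ℝ :=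
  (Dcount N σ : ℝ) * Real.exp (N * (J * mConf σ ^ 2 + bIMD N J h * mConf σ))

/-- The probability of an event `A` under the weighted Curie–Weiss Gibbs measure. -/
def probConf (N : ℕ) (J h : ℝ) (A : Config N → Prop) : ℝ :=
  (∑ σ : Config N, Set.indicator {σ | A σ} (wConf N J h) σ) / ∑ σ : Config N, wConf N J h σ

/-- Expectation under the weighted Curie–Weiss Gibbs measure. -/
def EConf (N : ℕ) (J h : ℝ) (f : Config N → ℝ) : ℝ :=
  (∑ σ : Config N, wConf N J h σ * f σ) / ∑ σ : Config N, wConf N J h σ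

/-- `L₁(m) = 2(1-m)(m² - (1-m)e^{2τ(m)})/((1-m) + e^{2τ(m)})`. -/
def Lone (J h m : ℝ) : ℝ :=
  2*(1-m)*(m^2 - (1-m)*Real.exp (2 * tauFun J h m)) / ((1-m) + Real.exp (2 * tauFun J h m))

/-- `L₂(m) = 4(1-m)(m² + (1-m)e^{2τ(m)})/((1-m) + e^{2τ(m)})`. -/
def Ltwo (J h m : ℝ) : ℝ :=
  4*(1-m)*(m^2 + (1-m)*Real.exp (2 * tauFun J h m)) / ((1-m) + Real.exp (2 * tauFun J h m))

/-- The configuration obtained from `σ` by setting the spins at `u, v` to `s, t`. -/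
def upd {N : ℕ} (σ : Config N) (u v : Fin N) (s t : Bool) : Config N :=
  fun i => if i = u then s else if i = v then t else σ i

/-- The edges of the complete graph, enumerated as ordered pairs `u < v`. -/
def cEdges (N : ℕ) : Finset (Fin N × Fin N) := Finset.univ.filter fun p => p.1 < p.2

/-- The probability of resampling the pair of spins at `(u,v)` to `(s,t)`:
the conditional distribution of `(σ_u, σ_v)` given `(σ_i)_{i ≠ u,v}`. -/
def qCond (N : ℕ) (J h : ℝ) (σ : Config N) (u v : Fin N) (s t : Bool) : ℝ :=
  wConf N J h (upd σ u v s t) / ∑ st : Bool × Bool, wConf N J h (upd σ u v st.1 st.2)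

/-- `E[F(σ, σ') | σ]` for the exchangeable pair `(σ, σ')` obtained by resampling the
spins at a uniformly chosen edge. -/
def condE2 (N : ℕ) (J h : ℝ) (F : Config N → Config N → ℝ) (σ : Config N) : ℝ :=
  ((cEdges N).card : ℝ)⁻¹ * ∑ p ∈ cEdges N, ∑ st : Bool × Bool,
    qCond N J h σ p.1 p.2 st.1 st.2 * F σ (upd σ p.1 p.2 st.1 st.2)

/-- The weight of the Gibbs measure conditioned on the event `S`. -/
def wCond (N : ℕ) (J h : ℝ) (S : Config N → Prop) (σ : Config N) : ℝ :=
  Set.indicator {σ | S σ} (wConf N J h) σ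

/-- `ℙ_ℓ(A) = ℙ(A | S)`, probability under the conditioned Gibbs measure. -/
def probL (N : ℕ) (J h : ℝ) (S A : Config N → Prop) : ℝ :=
  (∑ σ : Config N, Set.indicator {σ | A σ} (wCond N J h S) σ) / ∑ σ : Config N, wCond N J h S σ

/-- Expectation under the conditioned Gibbs measure `ℙ(·|S)`. -/
def EL (N : ℕ) (J h : ℝ) (S : Config N → Prop) (f : Config N → ℝ) : ℝ :=
  (∑ σ : Config N, wCond N J h S σ * f σ) / ∑ σ : Config N, wCond N J h S σ

/-- Resampling probability for the conditioned measure `ℙ(·|S)`. -/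
def qCondL (N : ℕ) (J h : ℝ) (S : Config N → Prop) (σ : Config N) (u v : Fin N)
    (s t : Bool) : ℝ :=
  wCond N J h S (upd σ u v s t) / ∑ st : Bool × Bool, wCond N J h S (upd σ u v st.1 st.2)

/-- `E_ℓ[F(σ, σ') | σ]` for the exchangeable pair under the conditioned measure. -/
def condE2L (N : ℕ) (J h : ℝ) (S : Config N → Prop) (F : Config N → Config N → ℝ)
    (σ : Config N) : ℝ :=
  ((cEdges N).card : ℝ)⁻¹ * ∑ p ∈ cEdges N, ∑ st : Bool × Bool,
    qCondL N J h S σ p.1 p.2 st.1 st.2 * F σ (upd σ p.1 p.2 st.1 st.2)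

/-- The maximizer set `O` of `𝑝̃` on `[0,1]`. -/
def maxSet (J h : ℝ) : Set ℝ :=
  {x | x ∈ Set.Icc (0:ℝ) 1 ∧ ∀ y ∈ Set.Icc (0:ℝ) 1, ptilde J h y ≤ ptilde J h x}

end

/-!
The Gibbs weight of a configuration depends only on its number of dimers, and the number of
configurations with `j` dimers is explicit, so the law of the monomer density lives on a lattice of
mesh `2 / N`. By Stirling's formula its weights are, up to a common factor and polynomially bounded
corrections, `exp (N * rate)`; near a nondegenerate peak `m` they follow a Gaussian profile in
`t = √N * (x - m)` with an error of order `1 / √N` which, thanks to the Gaussian decay, is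
integrable in `t`. The rate is at most `ptilde` by Gibbs' inequality, with equality at the fixed
points of `gFun ∘ tauFun`, so on a neighbourhood of `m` whose closure contains no other maximizer of
`ptilde` there is a single peak, and the weights far from it are exponentially small. Comparing the
weights with increments of the Gaussian distribution function, whose sums telescope, gives the
Kolmogorov distance `O(1 / √N)`.
-/

open Filter Topology Asymptotics ProbabilityTheory

/-! ### Counting dimer configurations -/

/-- The involution of a dimer configuration, as a permutation: its 2-cycles are the dimers. -/
def Dimer.toPerm {N : ℕ} (D : Dimer N) : Equiv.Perm (Fin N) :=
  Function.Involutive.toPerm D.1 D.2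

/-- The number of dimers, read off from the cycle type, which lists no fixed points. -/
def Dimer.numDimers {N : ℕ} (D : Dimer N) : ℕ :=
  Multiset.card D.toPerm.cycleType

lemma Dimer.toPerm_injective {N : ℕ} : Function.Injective (Dimer.toPerm (N := N)) :=
  fun _ _ h => Subtype.ext (congrArg (fun σ : Equiv.Perm (Fin N) => (σ : Fin N → Fin N)) h)

lemma Dimer.toPerm_sq {N : ℕ} (D : Dimer N) : D.toPerm ^ 2 = 1 :=
  Equiv.ext fun i => D.2 i

lemma Dimer.exists_toPerm_eq {N : ℕ} {σ : Equiv.Perm (Fin N)} (hσ : σ ^ 2 = 1) :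
    ∃ D : Dimer N, D.toPerm = σ :=
  ⟨⟨σ, fun i => DFunLike.congr_fun hσ i⟩, Equiv.ext fun _ => rfl⟩

lemma Dimer.cycleType_toPerm {N : ℕ} (D : Dimer N) :
    D.toPerm.cycleType = Multiset.replicate D.numDimers 2 :=
  haveI : Fact (Nat.Prime 2) := ⟨Nat.prime_two⟩
  Multiset.eq_replicate.mpr ⟨rfl, Equiv.Perm.pow_prime_eq_one_iff.mp D.toPerm_sq⟩

lemma Dimer.monomers_eq_compl_support {N : ℕ} (D : Dimer N) :
    monomers D = D.toPerm.supportᶜ := by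
  ext i
  rw [monomers, mem_filter_univ, mem_compl, Equiv.Perm.mem_support, not_not]
  rfl

lemma Dimer.card_monomers_add {N : ℕ} (D : Dimer N) :
    #(monomers D) + 2 * D.numDimers = N := by
  have hsupp : #D.toPerm.support = D.numDimers * 2 := by
    rw [← Equiv.Perm.sum_cycleType, D.cycleType_toPerm, Multiset.sum_replicate, smul_eq_mul]
  have hcompl := card_compl_add_card D.toPerm.support
  rw [← D.monomers_eq_compl_support, Fintype.card_fin] at hcompl
  lia

lemma card_numDimers_eq_card_cycleType (N j : ℕ) :
    #{D : Dimer N | D.numDimers = j} =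
      #{σ : Equiv.Perm (Fin N) | σ.cycleType = Multiset.replicate j 2} := by
  refine card_nbij Dimer.toPerm (fun D hD => ?_) Dimer.toPerm_injective.injOn fun σ hσ => ?_
  · rw [mem_coe, mem_filter_univ] at hD ⊢
    rw [D.cycleType_toPerm, hD]
  · rw [mem_coe, mem_filter_univ] at hσ
    have : Fact (Nat.Prime 2) := ⟨Nat.prime_two⟩
    obtain ⟨D, rfl⟩ := Dimer.exists_toPerm_eq (σ := σ) <|
      Equiv.Perm.pow_prime_eq_one_iff.mpr fun _ hc => Multiset.eq_of_mem_replicate (hσ ▸ hc)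
    refine ⟨D, ?_, rfl⟩
    rw [mem_coe, mem_filter_univ, Dimer.numDimers, hσ, Multiset.card_replicate]

lemma card_numDimers_mul {N j : ℕ} (hj : 2 * j ≤ N) :
    #{D : Dimer N | D.numDimers = j} * ((N - 2 * j).factorial * 2 ^ j * j.factorial) =
      N.factorial := by
  have hcount := Equiv.Perm.card_of_cycleType_mul_eq (Fin N) (Multiset.replicate j 2)
  have hprod : (∏ n ∈ (Multiset.replicate j 2).toFinset,
      ((Multiset.replicate j 2).count n).factorial) = j.factorial := by
    rcases eq_or_ne j 0 with rfl | hj0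
    · rfl
    · rw [Multiset.toFinset_replicate, if_neg hj0, prod_singleton, Multiset.count_replicate_self]
  have hvalid : (Multiset.replicate j 2).sum ≤ Fintype.card (Fin N) ∧
      ∀ a ∈ Multiset.replicate j 2, 2 ≤ a := by
    refine ⟨?_, fun a ha => (Multiset.eq_of_mem_replicate ha).ge⟩
    rwa [Multiset.sum_replicate, smul_eq_mul, Fintype.card_fin, mul_comm]
  rwa [if_pos hvalid, hprod, Multiset.sum_replicate, Multiset.prod_replicate, Fintype.card_fin,
    smul_eq_mul, mul_comm j 2, ← card_numDimers_eq_card_cycleType] at hcount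

/-- The number of configurations of `j` dimers on `N` vertices; meaningful for `2 * j ≤ N`. -/
noncomputable def dimerCount (N j : ℕ) : ℝ :=
  N.factorial / ((N - 2 * j).factorial * 2 ^ j * j.factorial)

lemma dimerCount_pos (N j : ℕ) : 0 < dimerCount N j := by
  unfold dimerCount
  positivity

lemma sum_comp_card_monomers {N : ℕ} (F : ℕ → ℝ) :
    ∑ D : Dimer N, F #(monomers D) =
      ∑ j ∈ range (N / 2 + 1), dimerCount N j * F (N - 2 * j) := by
  rw [← sum_fiberwise_of_maps_to (t := range (N / 2 + 1)) (g := Dimer.numDimers)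
    fun D _ => by have := D.card_monomers_add; rw [mem_range]; lia]
  refine sum_congr rfl fun j hj => ?_
  have hj' : 2 * j ≤ N := by rw [mem_range] at hj; lia
  have hcard : (#{D : Dimer N | D.numDimers = j} : ℝ) = dimerCount N j := by
    rw [dimerCount, eq_div_iff (by positivity)]
    exact_mod_cast card_numDimers_mul hj'
  rw [← hcard, ← nsmul_eq_mul]
  refine sum_eq_card_nsmul fun D hD => ?_
  rw [mem_filter_univ] at hD
  rw [← hD, ← Nat.eq_sub_of_add_eq D.card_monomers_add]

/-! ### The rate function -/

lemma exp_four_mul (x : ℝ) : rexp (4 * x) = rexp (2 * x) ^ 2 := by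
  rw [← exp_nat_mul]
  ring_nf

lemma gFun_pos (x : ℝ) : 0 < gFun x := by
  have h : rexp (2 * x) < √(rexp (4 * x) + 4 * rexp (2 * x)) := by
    refine lt_sqrt_of_sq_lt ?_
    rw [exp_four_mul]
    linarith [exp_pos (2 * x)]
  unfold gFun
  linarith

lemma gFun_sq (x : ℝ) : gFun x ^ 2 = (1 - gFun x) * rexp (2 * x) := by
  have hs := sq_sqrt (show 0 ≤ rexp (4 * x) + 4 * rexp (2 * x) by positivity)
  unfold gFun
  linear_combination hs / 4 + exp_four_mul x / 4

lemma gFun_lt_one (x : ℝ) : gFun x < 1 := by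
  have hpos : 0 < (1 - gFun x) * rexp (2 * x) := gFun_sq x ▸ pow_pos (gFun_pos x) 2
  exact sub_pos.1 (pos_of_mul_pos_left hpos (exp_pos _).le)

lemma two_mul_log_gFun (x : ℝ) : 2 * log (gFun x) = log (1 - gFun x) + 2 * x := by
  have h := congrArg log (gFun_sq x)
  rwa [log_pow, log_mul (sub_pos.2 (gFun_lt_one x)).ne' (exp_pos _).ne', log_exp,
    Nat.cast_ofNat] at h

lemma hasDerivAt_gFun (x : ℝ) :
    HasDerivAt gFun (2 * gFun x * (1 - gFun x) / (2 - gFun x)) x := by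
  have hpos : 0 < rexp (4 * x) + 4 * rexp (2 * x) := by positivity
  have he4 : HasDerivAt (fun y : ℝ => rexp (4 * y)) (rexp (4 * x) * (4 * 1)) x :=
    ((hasDerivAt_id x).const_mul 4).exp
  have he2 : HasDerivAt (fun y : ℝ => rexp (2 * y)) (rexp (2 * x) * (2 * 1)) x :=
    ((hasDerivAt_id x).const_mul 2).exp
  refine ((((he4.add (he2.const_mul 4)).sqrt hpos.ne').sub he2).div_const 2).congr_deriv ?_
  have hlt := gFun_lt_one x
  have hs := sq_sqrt hpos.le
  have hspos := sqrt_pos.2 hpos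
  simp only [Pi.add_apply]
  unfold gFun at hlt ⊢
  set S := √(rexp (4 * x) + 4 * rexp (2 * x))
  rw [exp_four_mul] at hs ⊢
  set E := rexp (2 * x)
  rw [eq_div_iff (by linarith)]
  field_simp
  linear_combination 4 * (S - E - 2) * hs

lemma hasDerivAt_tauFun (J h x : ℝ) : HasDerivAt (tauFun J h) (2 * J) x :=
  ((((hasDerivAt_id x).const_mul 2).sub_const 1).mul_const J).add_const h |>.congr_deriv (by ring)

lemma hasDerivAt_gFun_tauFun (J h x : ℝ) :
    HasDerivAt (fun y => gFun (tauFun J h y)) (2 * gFun (tauFun J h x) *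
      (1 - gFun (tauFun J h x)) / (2 - gFun (tauFun J h x)) * (2 * J)) x :=
  (hasDerivAt_gFun (tauFun J h x)).comp x (hasDerivAt_tauFun J h x)

lemma hasDerivAt_ptilde (J h x : ℝ) :
    HasDerivAt (ptilde J h) (2 * J * (gFun (tauFun J h x) - x)) x := by
  have hlt := gFun_lt_one (tauFun J h x)
  have hsub := (hasDerivAt_gFun_tauFun J h x).const_sub 1
  refine ((((hasDerivAt_id x).pow 2).const_mul (-J)).sub
    ((hsub.add (hsub.log (sub_pos.2 hlt).ne')).div_const 2)).congr_deriv ?_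
  have h1 : 1 - gFun (tauFun J h x) ≠ 0 := (sub_pos.2 hlt).ne'
  have h2 : 2 - gFun (tauFun J h x) ≠ 0 := by linarith
  simp only [id]
  field_simp
  push_cast
  ring

lemma iteratedDeriv_two_ptilde (J h x : ℝ) :
    iteratedDeriv 2 (ptilde J h) x =
      2 * J * (2 * gFun (tauFun J h x) * (1 - gFun (tauFun J h x)) /
        (2 - gFun (tauFun J h x)) * (2 * J) - 1) := by
  rw [iteratedDeriv_succ, iteratedDeriv_one, funext fun y => (hasDerivAt_ptilde J h y).deriv]
  exact (((hasDerivAt_gFun_tauFun J h x).sub (hasDerivAt_id x)).const_mul (2 * J)).deriv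

/-- The exponential rate of the Gibbs measure at monomer density `x`: up to polynomial factors and a
normalization independent of `x`, the configurations of density `x` have total weight
`exp (N * rateFun J h x)`. -/
noncomputable def rateFun (J h x : ℝ) : ℝ :=
  J * x ^ 2 + (h - J) * x - x * log x - (1 - x) / 2 * log (1 - x) - (1 - x) / 2

lemma continuous_rateFun (J h : ℝ) : Continuous (rateFun J h) := by
  have hlog : Continuous fun x : ℝ => (1 - x) * log (1 - x) :=
    continuous_mul_log.comp (by fun_prop : Continuous fun x : ℝ => 1 - x)
  have heq : rateFun J h = fun x => J * x ^ 2 + (h - J) * x - x * log x -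
      (1 - x) * log (1 - x) / 2 - (1 - x) / 2 := by
    funext x
    unfold rateFun
    ring
  have hpoly : Continuous fun x : ℝ => J * x ^ 2 + (h - J) * x := by fun_prop
  rw [heq]
  exact ((hpoly.sub continuous_mul_log).sub (hlog.div_const 2)).sub (by fun_prop)

lemma mul_log_sub_log_le {x y : ℝ} (hx : 0 ≤ x) (hy : 0 < y) :
    x * (log y - log x) ≤ y - x := by
  rcases hx.eq_or_lt with rfl | hx
  · simpa using hy.le
  · rw [← log_div hy.ne' hx.ne']
    have := mul_le_mul_of_nonneg_left (log_le_sub_one_of_pos (div_pos hy hx)) hx.le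
    rwa [mul_sub, mul_div_cancel₀ _ hx.ne', mul_one] at this

-- Gibbs' inequality for the weights `(x, 1 - x)` against `(g, 1 - g)`, `g = gFun (tauFun J h x)`.
lemma rateFun_le_ptilde (J h : ℝ) {x : ℝ} (hx : x ∈ Set.Icc (0 : ℝ) 1) :
    rateFun J h x ≤ ptilde J h x := by
  have hx1 := mul_log_sub_log_le hx.1 (gFun_pos (tauFun J h x))
  have hx2 := mul_log_sub_log_le (sub_nonneg.2 hx.2) (sub_pos.2 (gFun_lt_one (tauFun J h x)))
  have hg := two_mul_log_gFun (tauFun J h x)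
  have hτ : tauFun J h x = (2 * x - 1) * J + h := rfl
  unfold rateFun ptilde
  linear_combination hx1 + hx2 / 2 - x / 2 * hg - x * hτ

lemma rateFun_eq_ptilde {J h x : ℝ} (hx : x = gFun (tauFun J h x)) :
    rateFun J h x = ptilde J h x := by
  have hg := two_mul_log_gFun (tauFun J h x)
  have hτ : tauFun J h x = (2 * x - 1) * J + h := rfl
  unfold rateFun ptilde
  rw [← hx] at hg ⊢
  linear_combination - x / 2 * hg - x * hτ

lemma hasDerivAt_rateFun (J h : ℝ) {x : ℝ} (hx : x ∈ Set.Ioo (0 : ℝ) 1) :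
    HasDerivAt (rateFun J h) (2 * J * x + h - J - log x + log (1 - x) / 2) x := by
  have hx1 : 1 - x ≠ 0 := (sub_pos.2 hx.2).ne'
  have hid := hasDerivAt_id x
  have hsub := hid.const_sub 1
  refine (((((hid.pow 2).const_mul J).add (hid.const_mul (h - J))).sub
    (hasDerivAt_mul_log hx.1.ne')).sub ((hsub.div_const 2).mul (hsub.log hx1)) |>.sub
    (hsub.div_const 2)).congr_deriv ?_
  simp only [id]
  field_simp
  ring

lemma hasDerivAt_deriv_rateFun (J h : ℝ) {x : ℝ} (hx : x ∈ Set.Ioo (0 : ℝ) 1) :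
    HasDerivAt (fun y => 2 * J * y + h - J - log y + log (1 - y) / 2)
      (2 * J - x⁻¹ - (1 - x)⁻¹ / 2) x := by
  have hid := hasDerivAt_id x
  refine (((((hid.const_mul (2 * J)).add_const h).sub_const J).sub
    (hasDerivAt_log hx.1.ne')).add
    (((hid.const_sub 1).log (sub_pos.2 hx.2).ne').div_const 2)).congr_deriv ?_
  simp only [id]
  ring

lemma isBigO_pow_succ_of_hasDerivAt {E : Type*} [NormedAddCommGroup E] [NormedSpace ℝ E]
    {f f' : ℝ → E} {x₀ : ℝ} {n : ℕ} (hf : ∀ᶠ x in 𝓝 x₀, HasDerivAt f (f' x) x)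
    (hf' : f' =O[𝓝 x₀] fun x => (x - x₀) ^ n) :
    (fun x => f x - f x₀) =O[𝓝 x₀] fun x => (x - x₀) ^ (n + 1) := by
  obtain ⟨C, hC, hbound⟩ := hf'.exists_nonneg
  obtain ⟨δ, hδ, hball⟩ := Metric.eventually_nhds_iff_ball.1 (hf.and hbound.bound)
  refine .of_bound C <| Metric.eventually_nhds_iff_ball.2 ⟨δ, hδ, fun x hx => ?_⟩
  have hseg : segment ℝ x₀ x ⊆ Metric.ball x₀ δ :=
    (convex_ball x₀ δ).segment_subset (Metric.mem_ball_self hδ) hx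
  rw [pow_succ, norm_mul, ← mul_assoc]
  refine (convex_segment x₀ x).norm_image_sub_le_of_norm_hasDerivWithin_le
    (fun y hy => (hball y (hseg hy)).1.hasDerivWithinAt) (fun y hy => ?_)
    (left_mem_segment ℝ x₀ x) (right_mem_segment ℝ x₀ x)
  refine (hball y (hseg hy)).2.trans ?_
  rw [norm_pow, norm_pow]
  gcongr
  exact norm_sub_le_of_mem_segment hy

lemma taylor_two_isBigO {f f' f'' : ℝ → ℝ} {x₀ : ℝ} (hf : ∀ᶠ x in 𝓝 x₀, HasDerivAt f (f' x) x)
    (hf' : ∀ᶠ x in 𝓝 x₀, HasDerivAt f' (f'' x) x) (hf'' : DifferentiableAt ℝ f'' x₀) :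
    (fun x => f x - f x₀ - f' x₀ * (x - x₀) - f'' x₀ / 2 * (x - x₀) ^ 2) =O[𝓝 x₀]
      fun x => (x - x₀) ^ 3 := by
  have hsub (x : ℝ) : HasDerivAt (fun y => y - x₀) 1 x := (hasDerivAt_id x).sub_const x₀
  have h1 : (fun x => f' x - f' x₀ - f'' x₀ * (x - x₀)) =O[𝓝 x₀] fun x => (x - x₀) ^ 2 := by
    refine (isBigO_pow_succ_of_hasDerivAt (n := 1) (f := fun x => f' x - f'' x₀ * (x - x₀))
      (hf'.mono fun x hx => (hx.sub ((hsub x).const_mul (f'' x₀)))) ?_).congr_left fun x => by ring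
    simpa using hf''.isBigO_sub
  refine (isBigO_pow_succ_of_hasDerivAt (n := 2)
    (f := fun x => f x - f' x₀ * (x - x₀) - f'' x₀ / 2 * (x - x₀) ^ 2)
    (hf.mono fun x hx => (hx.sub ((hsub x).const_mul (f' x₀))).sub
      (((hsub x).pow 2).const_mul (f'' x₀ / 2))) ?_).congr_left fun x => by ring
  exact h1.congr_left fun x => by ring

lemma rateFun_sub_isBigO (J h : ℝ) {m : ℝ} (hm : m ∈ Set.Ioo (0 : ℝ) 1)
    (hmax : IsLocalMax (rateFun J h) m) :
    (fun x => rateFun J h x - rateFun J h m + (m⁻¹ + (1 - m)⁻¹ / 2 - 2 * J) / 2 * (x - m) ^ 2)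
      =O[𝓝 m] fun x => (x - m) ^ 3 := by
  have hIoo : ∀ᶠ x in 𝓝 m, x ∈ Set.Ioo (0 : ℝ) 1 := Ioo_mem_nhds hm.1 hm.2
  have hm1 : 1 - m ≠ 0 := (sub_pos.2 hm.2).ne'
  have hm0 : m ≠ 0 := hm.1.ne'
  have hcrit := hmax.hasDerivAt_eq_zero (hasDerivAt_rateFun J h hm)
  refine (taylor_two_isBigO (hIoo.mono fun x hx => hasDerivAt_rateFun J h hx)
    (hIoo.mono fun x hx => hasDerivAt_deriv_rateFun J h hx) (by fun_prop (disch := assumption))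
    ).congr_left fun x => ?_
  rw [hcrit]
  ring

/-- The variance `λ` of the limiting Gaussian at a maximizer `m` of `ptilde`. -/
noncomputable def limitVar (J h m : ℝ) : ℝ :=
  -(iteratedDeriv 2 (ptilde J h) m)⁻¹ - (2 * J)⁻¹

section Variance

variable {J h m : ℝ} (hc : iteratedDeriv 2 (ptilde J h) m < 0)
include hc

lemma pos_of_iteratedDeriv_two_ptilde_neg : 0 < J := by
  rw [iteratedDeriv_two_ptilde] at hc
  have hg0 := gFun_pos (tauFun J h m)
  have hg1 := gFun_lt_one (tauFun J h m)
  set g := gFun (tauFun J h m)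
  have hw : 0 ≤ 2 * g * (1 - g) / (2 - g) :=
    div_nonneg (mul_nonneg (by positivity) (by linarith)) (by linarith)
  by_contra! hJ
  nlinarith [mul_nonneg hw (sq_nonneg J)]

lemma curvature_pos_and_limitVar_eq (hfix : m = gFun (tauFun J h m)) :
    0 < m⁻¹ + (1 - m)⁻¹ / 2 - 2 * J ∧
      limitVar J h m = (m⁻¹ + (1 - m)⁻¹ / 2 - 2 * J)⁻¹ := by
  have hJ := pos_of_iteratedDeriv_two_ptilde_neg hc
  have hm0 : 0 < m := hfix ▸ gFun_pos _
  have hm1 : 0 < 1 - m := sub_pos.2 (hfix ▸ gFun_lt_one _)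
  have hm2 : 0 < 2 - m := by linarith
  have hκ : m⁻¹ + (1 - m)⁻¹ / 2 - 2 * J =
      ((2 - m) - 4 * J * m * (1 - m)) / (2 * m * (1 - m)) := by
    field_simp
    ring
  have hp : iteratedDeriv 2 (ptilde J h) m =
      -(2 * J * ((2 - m) - 4 * J * m * (1 - m)) / (2 - m)) := by
    rw [iteratedDeriv_two_ptilde, ← hfix]
    field_simp
    ring
  rw [hp, neg_lt_zero, div_pos_iff_of_pos_right hm2, mul_pos_iff_of_pos_left (by positivity)] at hc
  refine ⟨hκ ▸ div_pos hc (by positivity), ?_⟩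
  have hne := hc.ne'
  rw [limitVar, hp, hκ]
  generalize hk : 2 - m - 4 * J * m * (1 - m) = k at hne ⊢
  field_simp
  linear_combination hk

end Variance

/-! ### The Gaussian distribution function -/

/-- The density of the centered Gaussian with variance `v`; only meaningful for `0 < v`. -/
noncomputable def gaussDens (v t : ℝ) : ℝ := (√(2 * π * v))⁻¹ * rexp (-t ^ 2 / (2 * v))

lemma gaussDens_nonneg (v t : ℝ) : 0 ≤ gaussDens v t := by
  unfold gaussDens
  positivity

lemma gaussDens_le (v t : ℝ) (hv : 0 ≤ v) : gaussDens v t ≤ (√(2 * π * v))⁻¹ :=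
  mul_le_of_le_one_right (by positivity)
    (exp_le_one_iff.2 (div_nonpos_of_nonpos_of_nonneg (neg_nonpos.2 (sq_nonneg t)) (by positivity)))

lemma continuous_gaussDens (v : ℝ) : Continuous (gaussDens v) := by
  unfold gaussDens
  fun_prop

lemma hasDerivAt_gaussDens (v t : ℝ) :
    HasDerivAt (gaussDens v) (-(t / v) * gaussDens v t) t := by
  refine (((((hasDerivAt_id t).pow 2).neg.div_const (2 * v)).exp).const_mul
    (√(2 * π * v))⁻¹).congr_deriv ?_
  simp only [id, gaussDens, Pi.neg_apply, Pi.pow_apply]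
  field_simp
  push_cast
  ring

lemma gaussCDF_eq_cdf (v : ℝ) : gaussCDF v = cdf (gaussianReal 0 v.toNNReal) :=
  funext fun z => (cdf_eq_real _ z).symm

lemma gaussianPDFReal_toNNReal {v : ℝ} (hv : 0 ≤ v) :
    gaussianPDFReal 0 v.toNNReal = gaussDens v := by
  funext t
  simp only [gaussianPDFReal_def, gaussDens, coe_toNNReal v hv, sub_zero]

lemma integrable_gaussDens {v : ℝ} (hv : 0 ≤ v) : Integrable (gaussDens v) :=
  gaussianPDFReal_toNNReal hv ▸ integrable_gaussianPDFReal 0 v.toNNReal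

lemma gaussCDF_eq_integral {v : ℝ} (hv : 0 < v) (z : ℝ) :
    gaussCDF v z = ∫ t in Set.Iic z, gaussDens v t := by
  rw [gaussCDF, gaussianReal_apply_eq_integral 0 (toNNReal_pos.2 hv).ne',
    gaussianPDFReal_toNNReal hv.le, ENNReal.toReal_ofReal (integral_nonneg (gaussDens_nonneg v))]

lemma hasDerivAt_gaussCDF {v : ℝ} (hv : 0 < v) (z : ℝ) :
    HasDerivAt (gaussCDF v) (gaussDens v z) z := by
  have hint (a : ℝ) := (integrable_gaussDens hv.le).integrableOn (s := Set.Iic a)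
  have hcdf : gaussCDF v = fun z => (∫ t in (0 : ℝ)..z, gaussDens v t) + gaussCDF v 0 := by
    funext z
    rw [gaussCDF_eq_integral hv, gaussCDF_eq_integral hv,
      ← intervalIntegral.integral_Iic_sub_Iic (hint 0) (hint z), sub_add_cancel]
  rw [hcdf]
  exact ((continuous_gaussDens v).integral_hasStrictDerivAt 0 z).hasDerivAt.add_const _

lemma gaussianReal_real_abs_ge_le {v : ℝ} (hv : 0 ≤ v) {x : ℝ} (hx : 0 < x) :
    (gaussianReal 0 v.toNNReal).real {t | x ≤ |t|} ≤ v / x ^ 2 := by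
  have h := meas_ge_le_variance_div_sq (memLp_id_gaussianReal (μ := 0) (v := v.toNNReal) 2) hx
  rw [variance_id_gaussianReal] at h
  simp only [id, integral_id_gaussianReal, sub_zero, coe_toNNReal v hv] at h
  exact ENNReal.toReal_le_of_le_ofReal (by positivity) h

lemma gaussCDF_neg_le {v : ℝ} (hv : 0 ≤ v) {x : ℝ} (hx : 0 < x) :
    gaussCDF v (-x) ≤ v / x ^ 2 := by
  have hsub : Set.Iic (-x) ⊆ {t : ℝ | x ≤ |t|} := fun t (ht : t ≤ -x) =>
    show x ≤ |t| from le_abs.2 (Or.inr (le_neg.1 ht))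
  exact (measureReal_mono hsub).trans (gaussianReal_real_abs_ge_le hv hx)

lemma one_sub_gaussCDF_le {v : ℝ} (hv : 0 ≤ v) {x : ℝ} (hx : 0 < x) :
    1 - gaussCDF v x ≤ v / x ^ 2 := by
  have hcompl : 1 - gaussCDF v x = (gaussianReal 0 v.toNNReal).real (Set.Iic x)ᶜ :=
    (probReal_compl_eq_one_sub measurableSet_Iic).symm
  rw [hcompl]
  have hsub : (Set.Iic x)ᶜ ⊆ {t : ℝ | x ≤ |t|} := fun t (ht : ¬t ≤ x) =>
    show x ≤ |t| from le_abs.2 (Or.inl (not_le.1 ht).le)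
  exact (measureReal_mono hsub).trans (gaussianReal_real_abs_ge_le hv hx)

lemma pow_mul_exp_neg_le {c y : ℝ} (hc : 0 < c) (hy : 0 ≤ y) (k : ℕ) :
    y ^ k * rexp (-(c * y)) ≤ k.factorial / c ^ k := by
  have h := pow_div_factorial_le_exp (c * y) (by positivity) k
  rw [exp_neg, ← div_eq_mul_inv, div_le_div_iff₀ (exp_pos _) (by positivity)]
  rw [div_le_iff₀ (by positivity), mul_pow] at h
  linarith

lemma exists_gaussian_decay {c : ℝ} (hc : 0 < c) :
    ∃ C : ℝ, 0 < C ∧ ∀ t : ℝ, (1 + |t| ^ 3) * rexp (-(c * t ^ 2)) ≤ C / (1 + t ^ 2) := by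
  refine ⟨2 * (6 / c ^ 3 * rexp c), by positivity, fun t => ?_⟩
  have hdecay := pow_mul_exp_neg_le hc (show 0 ≤ 1 + t ^ 2 by positivity) 3
  have hexp : rexp (-(c * (1 + t ^ 2))) = rexp (-(c * t ^ 2)) * (rexp c)⁻¹ := by
    rw [← exp_neg, ← exp_add]
    ring_nf
  have hcube : 1 + |t| ^ 3 ≤ 2 * (1 + t ^ 2) ^ 2 := by
    rw [← sq_abs t]
    nlinarith [sq_nonneg (|t| - 1), sq_nonneg (|t| ^ 2 - |t|), abs_nonneg t]
  rw [hexp, ← mul_assoc, mul_inv_le_iff₀ (exp_pos c)] at hdecay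
  rw [le_div_iff₀ (by positivity)]
  calc (1 + |t| ^ 3) * rexp (-(c * t ^ 2)) * (1 + t ^ 2)
      ≤ 2 * (1 + t ^ 2) ^ 2 * rexp (-(c * t ^ 2)) * (1 + t ^ 2) := by gcongr
    _ = 2 * ((1 + t ^ 2) ^ 3 * rexp (-(c * t ^ 2))) := by ring
    _ ≤ 2 * (6 / c ^ 3 * rexp c) := mul_le_mul_of_nonneg_left hdecay zero_le_two

/-! ### Lattice sums of Gaussian cells -/

lemma abs_sub_sub_mul_le {F f f' : ℝ → ℝ} {B t η : ℝ} (hη : 0 ≤ η)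
    (hF : ∀ s ∈ Set.Icc (t - η) t, HasDerivAt F (f s) s)
    (hf : ∀ s ∈ Set.Icc (t - η) t, HasDerivAt f (f' s) s)
    (hB : ∀ s ∈ Set.Icc (t - η) t, |f' s| ≤ B) :
    |F t - F (t - η) - η * f t| ≤ B * η ^ 2 := by
  have hl : t - η ∈ Set.Icc (t - η) t := ⟨le_rfl, by linarith⟩
  have hr : t ∈ Set.Icc (t - η) t := ⟨by linarith, le_rfl⟩
  have hfs : ∀ s ∈ Set.Icc (t - η) t, |f s - f t| ≤ B * η := fun s hs => by
    have hmean := (convex_Icc (t - η) t).norm_image_sub_le_of_norm_hasDerivWithin_le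
      (fun y hy => (hf y hy).hasDerivWithinAt) hB hr hs
    refine hmean.trans (mul_le_mul_of_nonneg_left ?_ ((abs_nonneg _).trans (hB t hr)))
    rw [norm_eq_abs, abs_le]
    constructor <;> linarith [hs.1, hs.2]
  have hmean := (convex_Icc (t - η) t).norm_image_sub_le_of_norm_hasDerivWithin_le
    (f := fun s => F s - s * f t) (f' := fun s => f s - 1 * f t)
    (fun y hy => ((hF y hy).sub ((hasDerivAt_id y).mul_const (f t))).hasDerivWithinAt)
    (fun y hy => by simpa only [one_mul] using! hfs y hy) hl hr
  rw [sub_sub_cancel, norm_eq_abs, norm_eq_abs, abs_of_nonneg hη] at hmean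
  calc |F t - F (t - η) - η * f t| = |F t - t * f t - (F (t - η) - (t - η) * f t)| := by ring_nf
    _ ≤ B * η * η := hmean
    _ = B * η ^ 2 := by ring

-- Peetre's inequality.
lemma one_add_sq_le (s t : ℝ) : 1 + s ^ 2 ≤ 2 * (1 + (s - t) ^ 2) * (1 + t ^ 2) := by
  nlinarith [sq_nonneg (s - 2 * t), mul_nonneg (sq_nonneg (s - t)) (sq_nonneg t)]

lemma one_add_sq_le_of_mem_Icc {s t η : ℝ} (hη : η ≤ 2) (hs : s ∈ Set.Icc (t - η) t) :
    1 + s ^ 2 ≤ 10 * (1 + t ^ 2) ∧ 1 + t ^ 2 ≤ 10 * (1 + s ^ 2) := by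
  have hsq : (s - t) ^ 2 ≤ 4 := by nlinarith [hs.1, hs.2]
  constructor
  · nlinarith [one_add_sq_le s t, sq_nonneg t]
  · nlinarith [one_add_sq_le t s, sq_nonneg s]

lemma div_one_add_sq_le_arctan_sub {t η : ℝ} (hη : 0 ≤ η) (hη2 : η ≤ 2) :
    η / (1 + t ^ 2) ≤ 10 * (arctan t - arctan (t - η)) := by
  have hmean := (convex_Icc (t - η) t).mul_sub_le_image_sub_of_le_deriv (f := arctan)
    (C := (10 * (1 + t ^ 2))⁻¹) continuous_arctan.continuousOn
    differentiable_arctan.differentiableOn (fun s hs => ?_) (t - η) ⟨le_rfl, by linarith⟩ t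
    ⟨by linarith, le_rfl⟩ (by linarith)
  · rw [sub_sub_cancel, mul_inv] at hmean
    rw [div_eq_inv_mul]
    linarith
  · simp only [Real.deriv_arctan, one_div]
    exact inv_anti₀ (by positivity) (one_add_sq_le_of_mem_Icc hη2 (interior_subset hs)).1

lemma sum_div_one_add_sq_le {η : ℝ} (hη : 0 ≤ η) (hη2 : η ≤ 2) (a : ℝ) (n : ℕ) :
    ∑ j ∈ range n, η / (1 + (a - η * j) ^ 2) ≤ 10 * π := by
  calc ∑ j ∈ range n, η / (1 + (a - η * j) ^ 2)
      ≤ ∑ j ∈ range n, 10 * (arctan (a - η * j) - arctan (a - η * (j + 1 : ℕ))) := by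
        refine sum_le_sum fun j _ => (div_one_add_sq_le_arctan_sub hη hη2).trans_eq ?_
        push_cast
        ring_nf
    _ = 10 * (arctan a - arctan (a - η * n)) := by
        rw [← mul_sum, sum_range_sub' fun j : ℕ => arctan (a - η * j), Nat.cast_zero, mul_zero,
          sub_zero]
    _ ≤ 10 * π := by
        linarith [arctan_lt_pi_div_two a, neg_pi_div_two_lt_arctan (a - η * n)]

lemma filter_sub_mul_le_eq_Ico {η : ℝ} (hη : 0 < η) (a z : ℝ) (n : ℕ) :
    {j ∈ range n | a - η * (j : ℕ) ≤ z} = Ico (min ⌈(a - z) / η⌉₊ n) n := by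
  ext j
  have hceil : a - η * j ≤ z ↔ ⌈(a - z) / η⌉₊ ≤ j := by
    rw [Nat.ceil_le, div_le_iff₀ hη, sub_le_comm, mul_comm]
  rw [mem_filter, mem_range, mem_Ico, hceil]
  lia

-- The cells to the left of `z` telescope up to the one that contains `z`.
lemma abs_sum_cells_sub_le {F : ℝ → ℝ} (hmono : Monotone F) (h0 : ∀ t, 0 ≤ F t) (h1 : ∀ t, F t ≤ 1)
    {η ε : ℝ} (hη : 0 < η) (hε : ∀ t, F t ≤ F (t - η) + ε) (a z : ℝ) (n : ℕ) :
    |∑ j ∈ range n with a - η * (j : ℕ) ≤ z, (F (a - η * (j : ℕ)) - F (a - η * (j : ℕ) - η)) - F z|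
      ≤ ε + F (a - η * n) + (1 - F a) := by
  set q := ⌈(a - z) / η⌉₊
  set p := min q n with hp
  have hsum : ∑ j ∈ range n with a - η * (j : ℕ) ≤ z, (F (a - η * j) - F (a - η * j - η)) =
      F (a - η * p) - F (a - η * n) := by
    rw [filter_sub_mul_le_eq_Ico hη, ← neg_inj, ← sum_neg_distrib, neg_sub,
      ← sum_Ico_sub (fun j : ℕ => F (a - η * j)) (min_le_right q n)]
    refine sum_congr rfl fun j _ => ?_
    push_cast
    ring_nf
  have hupper : F (a - η * p) - F (a - η * n) ≤ F z := by
    rcases le_total q n with hqn | hqn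
    · have hz : a - η * p ≤ z := by
        rw [hp, min_eq_left hqn, sub_le_comm, mul_comm, ← div_le_iff₀ hη]
        exact Nat.le_ceil _
      linarith [hmono hz, h0 (a - η * n)]
    · rw [hp, min_eq_right hqn, sub_self]
      exact h0 z
  have hlower : F z ≤ F (a - η * p) + ε + (1 - F a) := by
    have hε0 : 0 ≤ ε := by linarith [hε 0, hmono (show (0 : ℝ) - η ≤ 0 by linarith)]
    rcases Nat.eq_zero_or_pos p with hp0 | hp0
    · rw [hp0, Nat.cast_zero, mul_zero, sub_zero]
      linarith [h1 z]
    · have hz : z ≤ a - η * p + η := by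
        have hpred : ((p - 1 : ℕ) : ℝ) < (a - z) / η :=
          Nat.lt_ceil.1 (lt_of_lt_of_le (Nat.pred_lt hp0.ne') (min_le_left q n))
        rw [Nat.cast_pred hp0, lt_div_iff₀ hη] at hpred
        linarith
      have hcell := hε (a - η * p + η)
      rw [add_sub_cancel_right] at hcell
      linarith [hmono hz, h1 a]
  rw [hsum, abs_le]
  constructor <;> linarith [h0 (a - η * n), h1 a, hε 0, hmono (show (0 : ℝ) - η ≤ 0 by linarith)]

lemma abs_div_sub_le {S Z : ℝ} (hS : 0 ≤ S) (hSZ : S ≤ Z) (p : ℝ) :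
    |S / Z - p| ≤ |1 - Z| + |S - p| := by
  have hratio : |S / Z - S| ≤ |1 - Z| := by
    rcases (hS.trans hSZ).eq_or_lt with hZ | hZ
    · rw [← hZ, div_zero, le_antisymm (hZ ▸ hSZ) hS, sub_self, abs_zero]
      exact abs_nonneg _
    · rw [show S / Z - S = S / Z * (1 - Z) by field_simp, abs_mul, abs_of_nonneg (by positivity)]
      exact mul_le_of_le_one_left (abs_nonneg _) ((div_le_one hZ).2 hSZ)
  exact (abs_sub_le _ S _).trans (add_le_add_left hratio _)

lemma gaussCDF_le_add {v : ℝ} (hv : 0 < v) {η : ℝ} (hη : 0 ≤ η) (t : ℝ) :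
    gaussCDF v t ≤ gaussCDF v (t - η) + (√(2 * π * v))⁻¹ * η := by
  have hmean := convex_univ.norm_image_sub_le_of_norm_hasDerivWithin_le
    (fun y _ => (hasDerivAt_gaussCDF hv y).hasDerivWithinAt)
    (fun y _ => by
      rw [norm_eq_abs, abs_of_nonneg (gaussDens_nonneg v y)]
      exact gaussDens_le v y hv.le)
    (Set.mem_univ (t - η)) (Set.mem_univ t)
  rw [sub_sub_cancel, norm_eq_abs, norm_eq_abs, abs_of_nonneg hη] at hmean
  linarith [le_abs_self (gaussCDF v t - gaussCDF v (t - η))]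

lemma exists_gaussDens_decay {v : ℝ} (hv : 0 < v) :
    ∃ C : ℝ, 0 < C ∧ ∀ t : ℝ, (1 + |t| ^ 3) * gaussDens v t ≤ C / (1 + t ^ 2) := by
  obtain ⟨C, hC, hdecay⟩ := exists_gaussian_decay (show 0 < (2 * v)⁻¹ by positivity)
  refine ⟨(√(2 * π * v))⁻¹ * C, by positivity, fun t => ?_⟩
  have hexp : -t ^ 2 / (2 * v) = -((2 * v)⁻¹ * t ^ 2) := by ring
  rw [gaussDens, hexp, mul_left_comm, mul_div_assoc]
  exact mul_le_mul_of_nonneg_left (hdecay t) (by positivity)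

lemma exists_gaussCDF_cell_bound {v : ℝ} (hv : 0 < v) :
    ∃ C : ℝ, 0 < C ∧ ∀ t η : ℝ, 0 ≤ η → η ≤ 2 →
      |gaussCDF v t - gaussCDF v (t - η) - η * gaussDens v t| ≤ C / (1 + t ^ 2) * η ^ 2 := by
  obtain ⟨C, hC, hdecay⟩ := exists_gaussDens_decay hv
  refine ⟨10 * C / v, by positivity, fun t η hη hη2 => ?_⟩
  refine abs_sub_sub_mul_le hη (fun s _ => hasDerivAt_gaussCDF hv s)
    (fun s _ => hasDerivAt_gaussDens v s) fun s hs => ?_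
  have hcubic : |s| ≤ 1 + |s| ^ 3 := by nlinarith [sq_nonneg (|s| - 1), abs_nonneg s]
  calc |-(s / v) * gaussDens v s| = |s| * gaussDens v s / v := by
        rw [abs_mul, abs_neg, abs_div, abs_of_pos hv, abs_of_nonneg (gaussDens_nonneg v s)]
        ring
    _ ≤ C / (1 + s ^ 2) / v := by
        gcongr
        exact (mul_le_mul_of_nonneg_right hcubic (gaussDens_nonneg v s)).trans (hdecay s)
    _ ≤ C * (10 / (1 + t ^ 2)) / v := by
        rw [div_eq_mul_inv C]
        gcongr
        rw [inv_eq_one_div, div_le_div_iff₀ (by positivity) (by positivity), one_mul]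
        exact (one_add_sq_le_of_mem_Icc hη2 hs).2
    _ = 10 * C / v / (1 + t ^ 2) := by ring

/-- The weights `w j`, placed at the lattice points `a - η * j` for `j < n`, approximate the density
of the centered Gaussian with variance `v`, and the lattice covers all but `O(η)` of its mass. The
constant `M` is meant to be fixed while the mesh `η` tends to `0`. -/
structure IsGaussianLattice (v M η a : ℝ) (n : ℕ) (w : ℕ → ℝ) : Prop where
  mesh_pos : 0 < η
  mesh_le : η ≤ 2
  card_mul_sq_le : n * η ^ 2 ≤ M
  nonneg : ∀ j < n, 0 ≤ w j
  abs_sub_le : ∀ j < n,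
    |w j - gaussDens v (a - η * j)| ≤ M * (η / (1 + (a - η * j) ^ 2) + η ^ 2)
  left_tail : gaussCDF v (a - η * n) ≤ M * η
  right_tail : 1 - gaussCDF v a ≤ M * η

namespace IsGaussianLattice

variable {v M η a : ℝ} {n : ℕ} {w : ℕ → ℝ} (H : IsGaussianLattice v M η a n w)
include H

lemma const_nonneg : 0 ≤ M :=
  le_trans (by positivity) H.card_mul_sq_le

lemma sum_abs_sub_cell_le {C : ℝ} (hC : 0 ≤ C)
    (hcell : ∀ t, |gaussCDF v t - gaussCDF v (t - η) - η * gaussDens v t| ≤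
      C / (1 + t ^ 2) * η ^ 2) :
    ∑ j ∈ range n, |η * w j - (gaussCDF v (a - η * j) - gaussCDF v (a - η * j - η))| ≤
      ((M + C) * (10 * π) + M ^ 2) * η := by
  have hη := H.mesh_pos
  have hM := H.const_nonneg
  set cell : ℕ → ℝ := fun j => gaussCDF v (a - η * j) - gaussCDF v (a - η * j - η)
  have hterm : ∀ j ∈ range n,
      |η * w j - cell j| ≤ (M + C) * η * (η / (1 + (a - η * j) ^ 2)) + M * η ^ 3 := fun j hj => by
    calc |η * w j - cell j|
        = |η * (w j - gaussDens v (a - η * j)) - (cell j - η * gaussDens v (a - η * j))| := by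
          ring_nf
      _ ≤ η * (M * (η / (1 + (a - η * j) ^ 2) + η ^ 2)) + C / (1 + (a - η * j) ^ 2) * η ^ 2 := by
          refine (abs_sub _ _).trans (add_le_add ?_ (hcell _))
          rw [abs_mul, abs_of_pos hη]
          exact mul_le_mul_of_nonneg_left (H.abs_sub_le j (mem_range.1 hj)) hη.le
      _ = _ := by ring
  calc ∑ j ∈ range n, |η * w j - cell j|
      ≤ ∑ j ∈ range n, ((M + C) * η * (η / (1 + (a - η * j) ^ 2)) + M * η ^ 3) :=
        sum_le_sum hterm
    _ = (M + C) * η * ∑ j ∈ range n, η / (1 + (a - η * j) ^ 2) + M * η * (n * η ^ 2) := by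
        rw [sum_add_distrib, ← mul_sum, sum_const, card_range, nsmul_eq_mul]
        ring
    _ ≤ (M + C) * η * (10 * π) + M * η * M := by
        gcongr
        · exact sum_div_one_add_sq_le hη.le H.mesh_le a n
        · exact H.card_mul_sq_le
    _ = _ := by ring

end IsGaussianLattice

lemma exists_lattice_sum_bound {v : ℝ} (hv : 0 < v) (M : ℝ) :
    ∃ C : ℝ, ∀ {η a : ℝ} {n : ℕ} {w : ℕ → ℝ}, IsGaussianLattice v M η a n w → ∀ z : ℝ,
      |(∑ j ∈ range n with a - η * (j : ℕ) ≤ z, η * w j) - gaussCDF v z| ≤ C * η := by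
  obtain ⟨C, hC, hcell⟩ := exists_gaussCDF_cell_bound hv
  refine ⟨(M + C) * (10 * π) + M ^ 2 + (√(2 * π * v))⁻¹ + 2 * M, fun {η a n w} H z => ?_⟩
  have hη := H.mesh_pos
  set cell : ℕ → ℝ := fun j => gaussCDF v (a - η * j) - gaussCDF v (a - η * j - η)
  have hsum : |∑ j ∈ range n with a - η * (j : ℕ) ≤ z, (η * w j - cell j)| ≤
      ((M + C) * (10 * π) + M ^ 2) * η :=
    calc _ ≤ ∑ j ∈ range n with a - η * (j : ℕ) ≤ z, |η * w j - cell j| := abs_sum_le_sum_abs _ _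
      _ ≤ ∑ j ∈ range n, |η * w j - cell j| :=
          sum_le_sum_of_subset_of_nonneg (filter_subset _ _) fun _ _ _ => abs_nonneg _
      _ ≤ _ := H.sum_abs_sub_cell_le hC.le fun t => hcell t η hη.le H.mesh_le
  have htel := abs_sum_cells_sub_le (gaussCDF_eq_cdf v ▸ monotone_cdf _)
    (gaussCDF_eq_cdf v ▸ cdf_nonneg _) (gaussCDF_eq_cdf v ▸ cdf_le_one _) hη
    (gaussCDF_le_add hv hη.le) a z n
  rw [sum_sub_distrib] at hsum
  calc _ ≤ _ + _ := abs_sub_le _ (∑ j ∈ range n with a - η * (j : ℕ) ≤ z, cell j) _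
    _ ≤ _ := add_le_add hsum htel
    _ ≤ _ := by linarith [H.left_tail, H.right_tail]

theorem exists_lattice_ratio_bound {v : ℝ} (hv : 0 < v) (M : ℝ) :
    ∃ C : ℝ, ∀ {η a : ℝ} {n : ℕ} {w : ℕ → ℝ}, IsGaussianLattice v M η a n w → ∀ z : ℝ,
      |(∑ j ∈ range n with a - η * (j : ℕ) ≤ z, w j) / (∑ j ∈ range n, w j) - gaussCDF v z|
        ≤ C * η := by
  obtain ⟨C, hC⟩ := exists_lattice_sum_bound hv M
  refine ⟨2 * C + M, fun {η a n w} H z => ?_⟩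
  have hη := H.mesh_pos
  have hw : ∀ j ∈ range n, 0 ≤ η * w j := fun j hj =>
    mul_nonneg hη.le (H.nonneg j (mem_range.1 hj))
  have htotal : |1 - ∑ j ∈ range n, η * w j| ≤ (C + M) * η := by
    have hall := hC H a
    rw [filter_true_of_mem fun j _ => sub_le_self a (by positivity)] at hall
    have h1 := abs_le.1 hall
    have hle : gaussCDF v a ≤ 1 := gaussCDF_eq_cdf v ▸ cdf_le_one _ a
    rw [abs_le]
    constructor <;> linarith [H.right_tail]
  rw [← mul_div_mul_left _ _ hη.ne', mul_sum, mul_sum]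
  refine (abs_div_sub_le (sum_nonneg fun j hj => hw j (mem_of_mem_filter j hj))
    (sum_le_sum_of_subset_of_nonneg (filter_subset _ _) fun j hj _ => hw j hj) _).trans ?_
  linarith [hC H z]

/-! ### Stirling expansion of the Gibbs weights -/

lemma log_stirlingSeq_le {n : ℕ} (hn : n ≠ 0) :
    log (Stirling.stirlingSeq n) ≤ log π / 2 + 1 / (12 * n) := by
  obtain ⟨k, rfl⟩ := Nat.exists_eq_succ_of_ne_zero hn
  set f : ℕ → ℝ := fun i => log (Stirling.stirlingSeq (i + 1)) - 1 / (12 * (i + 1 : ℕ)) with hf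
  have hmono : Monotone f := monotone_nat_of_le_succ fun i => by
    have hdiff := Stirling.log_stirlingSeq_sdiff_le (i + 1)
    have hsplit : (1 : ℝ) / (12 * (i + 1 : ℕ) * ((i + 1 : ℕ) + 1)) =
        1 / (12 * (i + 1 : ℕ)) - 1 / (12 * (i + 1 + 1 : ℕ)) := by
      push_cast
      field_simp
      ring
    simp only [hf]
    linarith
  have hlim : Tendsto f atTop (𝓝 (log (√π) - 0)) := by
    refine Tendsto.sub (((tendsto_add_atTop_iff_nat 1).2
      Stirling.tendsto_stirlingSeq_sqrt_pi).log (by positivity)) ?_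
    have hden : Tendsto (fun i : ℕ => 12 * ((i + 1 : ℕ) : ℝ)) atTop atTop :=
      (tendsto_natCast_atTop_atTop.comp (tendsto_add_atTop_nat 1)).const_mul_atTop (by norm_num)
    exact tendsto_const_nhds.div_atTop hden
  have hle := hmono.ge_of_tendsto hlim k
  rw [log_sqrt pi_pos.le] at hle
  simp only [hf] at hle
  linarith

/-- The error `log n! - (n log n - n)` of the crude Stirling approximation. -/
noncomputable def stirlingErr (n : ℕ) : ℝ :=
  log n.factorial - (n * log n - n)

lemma stirlingErr_nonneg (n : ℕ) : 0 ≤ stirlingErr n := by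
  rcases eq_or_ne n 0 with rfl | hn
  · simp [stirlingErr]
  · have hfact := Stirling.le_log_factorial_stirling hn
    have hlog : 0 ≤ log (n : ℝ) := log_natCast_nonneg n
    have hpi : 0 ≤ log (2 * π) := log_nonneg (by linarith [pi_gt_three])
    unfold stirlingErr
    linarith

lemma abs_stirlingErr_sub_le {n : ℕ} (hn : n ≠ 0) :
    |stirlingErr n - log (2 * π * n) / 2| ≤ 1 / (12 * n) := by
  have hn' : (n : ℝ) ≠ 0 := Nat.cast_ne_zero.2 hn
  have hlower := Stirling.le_log_factorial_stirling hn
  have hupper := log_stirlingSeq_le hn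
  rw [Stirling.log_stirlingSeq_formula, log_div hn' (exp_ne_zero 1), log_exp,
    log_mul two_ne_zero hn'] at hupper
  rw [stirlingErr, log_mul (by positivity) hn', abs_le]
  have h2pi : log (2 * π) = log 2 + log π := log_mul two_ne_zero pi_ne_zero
  have hpos : (0 : ℝ) ≤ 1 / (12 * n) := by positivity
  constructor <;> linarith [hpos]

/-- The monomer density of the configurations of `j` dimers on `N` vertices. -/
noncomputable def monDens (N j : ℕ) : ℝ := ((N - 2 * j : ℕ) : ℝ) / N

/-- The total Gibbs weight of the configurations of `j` dimers on `N` vertices. -/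
noncomputable def gibbsWeight (N : ℕ) (J h : ℝ) (j : ℕ) : ℝ :=
  dimerCount N j * rexp (N * (J * monDens N j ^ 2 + bIMD N J h * monDens N j))

lemma gibbsWeight_pos (N : ℕ) (J h : ℝ) (j : ℕ) : 0 < gibbsWeight N J h j :=
  mul_pos (dimerCount_pos N j) (exp_pos _)

lemma natCast_mul_monDens {N : ℕ} (hN : N ≠ 0) (j : ℕ) :
    N * monDens N j = (N - 2 * j : ℕ) :=
  mul_div_cancel₀ _ (Nat.cast_ne_zero.2 hN)

lemma natCast_mul_one_sub_monDens {N j : ℕ} (hN : N ≠ 0) (hj : 2 * j ≤ N) :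
    N * (1 - monDens N j) = 2 * j := by
  rw [mul_one_sub, natCast_mul_monDens hN, Nat.cast_sub hj]
  push_cast
  ring

lemma monDens_mem_Icc (N j : ℕ) : monDens N j ∈ Set.Icc (0 : ℝ) 1 :=
  ⟨by unfold monDens; positivity,
    div_le_one_of_le₀ (Nat.cast_le.2 (Nat.sub_le N (2 * j))) N.cast_nonneg⟩

lemma mul_mul_log_mul {a : ℝ} (ha : a ≠ 0) (b x : ℝ) :
    b * x * log (a * x) = b * x * log a + b * (x * log x) := by
  rcases eq_or_ne x 0 with rfl | hx
  · simp
  · rw [log_mul ha hx]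
    ring

lemma log_gibbsWeight {N j : ℕ} (J h : ℝ) (hN : N ≠ 0) (hj : 2 * j ≤ N) :
    log (gibbsWeight N J h j) = log N.factorial - N * log N / 2 + N +
      N * rateFun J h (monDens N j) - stirlingErr (N - 2 * j) - stirlingErr j := by
  have hk := natCast_mul_monDens hN j
  have hj2 := natCast_mul_one_sub_monDens hN hj
  have hlogk := mul_mul_log_mul (Nat.cast_ne_zero.2 hN) N (monDens N j)
  have hlogj := mul_mul_log_mul (Nat.cast_ne_zero.2 hN) N (1 - monDens N j)
  have hlog2 : (j : ℝ) * log (2 * j) = j * log 2 + j * log j := by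
    simpa using mul_mul_log_mul two_ne_zero 1 (j : ℝ)
  rw [gibbsWeight, log_mul (dimerCount_pos N j).ne' (exp_pos _).ne', log_exp, dimerCount,
    log_div (by positivity) (by positivity), log_mul (by positivity) (by positivity),
    log_mul (by positivity) (by positivity), log_pow, bIMD, stirlingErr, stirlingErr, rateFun]
  rw [hk] at hlogk
  rw [hj2] at hlogj
  linear_combination -hlogk - hlogj / 2 + hlog2 + hk * (log N - 1) + hj2 * (log N - 1) / 2

lemma abs_log_sub_log_le {p y : ℝ} (hp : 0 < p) (hy : |y - p| ≤ p / 2) :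
    |log y - log p| ≤ 2 * (p⁻¹ * |y - p|) := by
  have hyp := abs_le.1 hy
  have hy0 : 0 < y := by linarith
  have hup := mul_log_sub_log_le hp.le hy0
  have hlo := mul_log_sub_log_le hy0.le hp
  have habs := abs_nonneg (y - p)
  rw [mul_left_comm, ← div_eq_inv_mul, le_div_iff₀ hp, ← abs_of_pos hp, ← abs_mul, abs_of_pos hp,
    abs_le]
  constructor
  · rcases le_or_gt 0 (log y - log p) with hlog | hlog
    · nlinarith
    · nlinarith [neg_abs_le (y - p)]
  · nlinarith [le_abs_self (y - p)]

lemma abs_stirlingErr_sub_le_of_abs_div_sub_le {p : ℝ} (hp : 0 < p) {N n : ℕ} (hN : N ≠ 0)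
    (hn : |(n : ℝ) / N - p| ≤ p / 2) :
    |stirlingErr n - log (2 * π * (N * p)) / 2| ≤ p⁻¹ * (|(n : ℝ) / N - p| + 1 / N) := by
  have hN' : (0 : ℝ) < N := Nat.cast_pos.2 (Nat.pos_of_ne_zero hN)
  have hy : p / 2 ≤ (n : ℝ) / N := by linarith [(abs_le.1 hn).1]
  have hpn : N * p ≤ 2 * n := by
    rw [le_div_iff₀ hN'] at hy
    linarith
  have hn0 : (0 : ℝ) < n := by nlinarith [mul_pos hN' hp]
  have hlog : log (2 * π * n) - log (2 * π * (N * p)) = log (n / N) - log p := by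
    rw [← log_div (by positivity) (by positivity), ← log_div (by positivity) (by positivity)]
    congr 1
    field_simp
  have hinv : 1 / (12 * (n : ℝ)) ≤ p⁻¹ * (1 / N) := by
    rw [← one_div, one_div_mul_one_div, mul_comm p]
    exact one_div_le_one_div_of_le (mul_pos hN' hp) (by linarith)
  calc |stirlingErr n - log (2 * π * (N * p)) / 2|
      ≤ |stirlingErr n - log (2 * π * n) / 2| +
          |log (2 * π * n) / 2 - log (2 * π * (N * p)) / 2| := abs_sub_le _ _ _
    _ ≤ p⁻¹ * (1 / N) + p⁻¹ * |(n : ℝ) / N - p| := by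
        refine add_le_add ((abs_stirlingErr_sub_le (Nat.cast_pos.1 hn0).ne').trans hinv) ?_
        rw [← sub_div, hlog, abs_div, abs_of_pos (zero_lt_two' ℝ), div_le_iff₀' zero_lt_two]
        exact abs_log_sub_log_le hp hn
    _ = _ := by ring

/-- The logarithm of `gibbsWeight N J h j`, up to an additive constant depending only on `N`, `J`,
`h` and `m`, normalized so as to be close to `0` when `monDens N j` is close to `m`. -/
noncomputable def logWeight (J h m : ℝ) (N j : ℕ) : ℝ :=
  N * (rateFun J h (monDens N j) - rateFun J h m) -
    (stirlingErr (N - 2 * j) - log (2 * π * (N * m)) / 2) -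
    (stirlingErr j - log (2 * π * (N * ((1 - m) / 2))) / 2)

lemma exists_gibbsWeight_eq_mul_exp_logWeight (J h m : ℝ) {N : ℕ} (hN : N ≠ 0) :
    ∃ A : ℝ, 0 < A ∧ ∀ j, 2 * j ≤ N → gibbsWeight N J h j = A * rexp (logWeight J h m N j) := by
  refine ⟨rexp (log N.factorial - N * log N / 2 + N + N * rateFun J h m -
    log (2 * π * (N * m)) / 2 - log (2 * π * (N * ((1 - m) / 2))) / 2), exp_pos _,
    fun j hj => ?_⟩
  rw [← exp_log (gibbsWeight_pos N J h j), log_gibbsWeight J h hN hj, ← exp_add, logWeight]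
  ring_nf

lemma exp_logWeight_le (J h : ℝ) {m : ℝ} (hm : m ∈ Set.Ioo (0 : ℝ) 1) {N : ℕ} (hN : N ≠ 0)
    (j : ℕ) :
    rexp (logWeight J h m N j) ≤
      2 * π * N * rexp (N * (rateFun J h (monDens N j) - rateFun J h m)) := by
  have hN' : (1 : ℝ) ≤ N := Nat.one_le_cast.2 (Nat.pos_of_ne_zero hN)
  have hlog {p : ℝ} (hp : 0 < p) (hp1 : p ≤ 1) : log (2 * π * (N * p)) ≤ log (2 * π * N) := by
    have : 0 < N * p := by positivity
    gcongr
    exact mul_le_of_le_one_right (by linarith) hp1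
  have hm1 := hlog hm.1 hm.2.le
  have hm2 := hlog (half_pos (sub_pos.2 hm.2)) (by linarith [hm.1])
  rw [← exp_log (show 0 < 2 * π * N by positivity), ← exp_add, exp_le_exp, logWeight]
  linarith [stirlingErr_nonneg (N - 2 * j), stirlingErr_nonneg j]

lemma abs_natCast_div_sub_eq {N j : ℕ} (hN : N ≠ 0) (hj : 2 * j ≤ N) (m : ℝ) :
    |(j : ℝ) / N - (1 - m) / 2| = |monDens N j - m| / 2 := by
  have hN' : (N : ℝ) ≠ 0 := Nat.cast_ne_zero.2 hN
  have hj2 := natCast_mul_one_sub_monDens hN hj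
  have hneg : (j : ℝ) / N - (1 - m) / 2 = -((monDens N j - m) / 2) := by
    field_simp
    linarith
  rw [hneg, abs_neg, abs_div, abs_of_pos (zero_lt_two' ℝ)]

lemma exists_logWeight_expansion (J h : ℝ) {m : ℝ} (hm : m ∈ Set.Ioo (0 : ℝ) 1)
    (hmax : IsLocalMax (rateFun J h) m) :
    ∃ C : ℝ, 0 < C ∧ ∀ᶠ x in 𝓝 m, ∀ N j : ℕ, N ≠ 0 → 2 * j ≤ N → monDens N j = x →
      |logWeight J h m N j + N * ((m⁻¹ + (1 - m)⁻¹ / 2 - 2 * J) / 2 * (x - m) ^ 2)| ≤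
        C * (N * |x - m| ^ 3 + |x - m| + 1 / N) := by
  obtain ⟨C, hC, hrate⟩ := (rateFun_sub_isBigO J h hm hmax).exists_pos
  have hm0 : 0 < m := hm.1
  have hm1 : 0 < (1 - m) / 2 := half_pos (sub_pos.2 hm.2)
  have hclose : ∀ᶠ x in 𝓝 m, |x - m| < min (m / 2) ((1 - m) / 2) :=
    Metric.ball_mem_nhds m (lt_min (half_pos hm0) hm1)
  refine ⟨C + (m⁻¹ + ((1 - m) / 2)⁻¹), by positivity, ?_⟩
  filter_upwards [hrate.bound, hclose] with x hx hxm N j hN hj hxj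
  rw [norm_eq_abs, norm_eq_abs, abs_pow] at hx
  have hhalf : |(j : ℝ) / N - (1 - m) / 2| = |x - m| / 2 := hxj ▸ abs_natCast_div_sub_eq hN hj m
  have hxk : ((N - 2 * j : ℕ) : ℝ) / N = x := hxj
  have hk := abs_stirlingErr_sub_le_of_abs_div_sub_le hm0 hN (n := N - 2 * j)
    (hxk ▸ hxm.le.trans (min_le_left _ _))
  have hd := abs_stirlingErr_sub_le_of_abs_div_sub_le hm1 hN (n := j) (by
    rw [hhalf]
    gcongr
    exact hxm.le.trans (min_le_right _ _))
  rw [hxk] at hk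
  rw [hhalf] at hd
  set κ := m⁻¹ + (1 - m)⁻¹ / 2 - 2 * J
  set q := ((1 - m) / 2)⁻¹
  have hq : 0 < q := inv_pos.2 hm1
  calc |logWeight J h m N j + N * (κ / 2 * (x - m) ^ 2)|
      = |N * (rateFun J h x - rateFun J h m + κ / 2 * (x - m) ^ 2) -
          (stirlingErr (N - 2 * j) - log (2 * π * (N * m)) / 2) -
          (stirlingErr j - log (2 * π * (N * ((1 - m) / 2))) / 2)| := by
        rw [logWeight, hxj]
        ring_nf
    _ ≤ N * (C * |x - m| ^ 3) + m⁻¹ * (|x - m| + 1 / N) + q * (|x - m| / 2 + 1 / N) := by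
        refine (abs_sub _ _).trans (add_le_add ((abs_sub _ _).trans (add_le_add ?_ hk)) hd)
        rw [abs_mul, Nat.abs_cast]
        gcongr
    _ ≤ N * (C * |x - m| ^ 3) + m⁻¹ * (|x - m| + 1 / N) + q * (|x - m| + 1 / N) +
          (C * (|x - m| + 1 / N) + (m⁻¹ + q) * (N * |x - m| ^ 3)) := by
        have hle : q * (|x - m| / 2 + 1 / N) ≤ q * (|x - m| + 1 / N) :=
          mul_le_mul_of_nonneg_left (add_le_add_left (half_le_self (abs_nonneg _)) _) hq.le
        have hrest : 0 ≤ C * (|x - m| + 1 / N) + (m⁻¹ + q) * (N * |x - m| ^ 3) := by positivity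
        linarith
    _ = _ := by ring

lemma abs_exp_sub_one_le_mul_exp (x : ℝ) : |rexp x - 1| ≤ |x| * rexp |x| := by
  have hlow := add_one_le_exp x
  have hupp := mul_le_mul_of_nonneg_right (add_one_le_exp (-x)) (exp_pos x).le
  rw [← exp_add, neg_add_cancel, exp_zero] at hupp
  have habs : |x| ≤ |x| * rexp |x| :=
    le_mul_of_one_le_right (abs_nonneg x) (one_le_exp (abs_nonneg x))
  have hmono : x * rexp x ≤ |x| * rexp |x| :=
    mul_le_mul (le_abs_self x) (exp_le_exp.2 (le_abs_self x)) (exp_pos x).le (abs_nonneg x)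
  rw [abs_le]
  constructor <;> linarith [neg_abs_le x]

lemma exists_exp_neg_sq_perturbation {κ C : ℝ} (hκ : 0 < κ) (hC : 0 < C) :
    ∃ K : ℝ, 0 < K ∧ ∀ {s t y : ℝ}, 0 < s → |y + κ / 2 * t ^ 2| ≤ C / s * (1 + |t| ^ 3) →
      |y + κ / 2 * t ^ 2| ≤ C + κ / 4 * t ^ 2 →
      |rexp y - rexp (-(κ / 2 * t ^ 2))| ≤ K / s / (1 + t ^ 2) := by
  obtain ⟨B, hB, hdecay⟩ := exists_gaussian_decay (show 0 < κ / 4 by positivity)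
  refine ⟨C * rexp C * B, by positivity, fun {s t y} hs hsmall hdom => ?_⟩
  set r := y + κ / 2 * t ^ 2 with hr
  have hy : rexp y = rexp (-(κ / 2 * t ^ 2)) * rexp r := by
    rw [← exp_add, hr]
    ring_nf
  have hexp : rexp (-(κ / 2 * t ^ 2)) * rexp (C + κ / 4 * t ^ 2) =
      rexp C * rexp (-(κ / 4 * t ^ 2)) := by
    rw [← exp_add, ← exp_add]
    ring_nf
  calc |rexp y - rexp (-(κ / 2 * t ^ 2))| = rexp (-(κ / 2 * t ^ 2)) * |rexp r - 1| := by
        rw [hy, ← mul_sub_one, abs_mul, abs_exp]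
    _ ≤ rexp (-(κ / 2 * t ^ 2)) * (C / s * (1 + |t| ^ 3) * rexp (C + κ / 4 * t ^ 2)) := by
        gcongr
        refine (abs_exp_sub_one_le_mul_exp r).trans ?_
        gcongr
    _ = C * rexp C / s * ((1 + |t| ^ 3) * rexp (-(κ / 4 * t ^ 2))) := by
        linear_combination C / s * (1 + |t| ^ 3) * hexp
    _ ≤ C * rexp C / s * (B / (1 + t ^ 2)) := by
        gcongr
        exact hdecay t
    _ = _ := by ring

lemma mul_cubic_add_le_div_mul {C s y : ℝ} (hC : 0 ≤ C) (hs : 1 ≤ s) (hy : 0 ≤ y) :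
    C * (s ^ 2 * y ^ 3 + y + 1 / s ^ 2) ≤ 3 * C / s * (1 + (s * y) ^ 3) := by
  have hinv : 1 / s ≤ 1 := (div_le_one (by linarith)).2 hs
  have hsy : 0 ≤ s * y := by positivity
  have hcubic : s * y ≤ 1 + (s * y) ^ 3 := by nlinarith [sq_nonneg (s * y - 1)]
  calc C * (s ^ 2 * y ^ 3 + y + 1 / s ^ 2) = C / s * ((s * y) ^ 3 + s * y + 1 / s) := by
        field_simp
    _ ≤ C / s * (3 * (1 + (s * y) ^ 3)) := by
        gcongr
        linarith [pow_nonneg hsy 3]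
    _ = _ := by ring

lemma mul_cubic_add_le_add_mul_sq {C κ s y : ℝ} (hC : 0 ≤ C) (hs : 1 ≤ s) (hy1 : y ≤ 1)
    (hCy : y * C ≤ κ) :
    C * (s ^ 2 * y ^ 3 + y + 1 / s ^ 2) ≤ 3 * C + κ * (s * y) ^ 2 := by
  have hinv : 1 / s ^ 2 ≤ 1 := (div_le_one (by positivity)).2 (one_le_pow₀ hs)
  calc C * (s ^ 2 * y ^ 3 + y + 1 / s ^ 2) = C * (y + 1 / s ^ 2) + y * C * (s * y) ^ 2 := by ring
    _ ≤ C * (1 + 1) + κ * (s * y) ^ 2 := by gcongr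
    _ ≤ _ := by linarith

lemma exists_exp_logWeight_near (J h : ℝ) {m : ℝ} (hm : m ∈ Set.Ioo (0 : ℝ) 1)
    (hmax : IsLocalMax (rateFun J h) m) {κ : ℝ} (hκ : κ = m⁻¹ + (1 - m)⁻¹ / 2 - 2 * J)
    (hκ0 : 0 < κ) :
    ∃ K : ℝ, 0 < K ∧ ∀ᶠ x in 𝓝 m, ∀ N j : ℕ, N ≠ 0 → 2 * j ≤ N → monDens N j = x →
      |rexp (logWeight J h m N j) - rexp (-(κ / 2 * (√N * (x - m)) ^ 2))| ≤
        K / √N / (1 + (√N * (x - m)) ^ 2) := by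
  obtain ⟨C, hC, hexpand⟩ := exists_logWeight_expansion J h hm hmax
  obtain ⟨K, hK, hperturb⟩ := exists_exp_neg_sq_perturbation hκ0 (show 0 < 3 * C by positivity)
  refine ⟨K, hK, ?_⟩
  have hclose : ∀ᶠ x in 𝓝 m, |x - m| < min 1 (κ / 4 / C) :=
    Metric.ball_mem_nhds m (by positivity)
  filter_upwards [hexpand, hclose] with x hx hxm N j hN hj hxj
  have hs : 1 ≤ √(N : ℝ) := one_le_sqrt.2 (Nat.one_le_cast.2 (Nat.pos_of_ne_zero hN))
  have hss : √(N : ℝ) ^ 2 = N := sq_sqrt N.cast_nonneg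
  have habs : |√(N : ℝ) * (x - m)| = √(N : ℝ) * |x - m| := by
    rw [abs_mul, abs_of_nonneg (sqrt_nonneg _)]
  specialize hx N j hN hj hxj
  have hshift : (N : ℝ) * (κ / 2 * (x - m) ^ 2) = κ / 2 * (√N * (x - m)) ^ 2 := by
    rw [mul_pow, hss]
    ring
  rw [← hκ, hshift] at hx
  refine hperturb (by linarith) (hx.trans ?_) (hx.trans ?_)
  · rw [habs, ← hss, sqrt_sq (sqrt_nonneg _)]
    exact mul_cubic_add_le_div_mul hC.le hs (abs_nonneg _)
  · rw [← sq_abs (√N * (x - m)), habs, ← hss, sqrt_sq (sqrt_nonneg _)]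
    exact mul_cubic_add_le_add_mul_sq hC.le hs (hxm.le.trans (min_le_left _ _))
      ((le_div_iff₀ hC).1 (hxm.le.trans (min_le_right _ _)))

/-! ### Local limit theorem -/

lemma exists_pos_forall_le_sub {X : Type*} [TopologicalSpace X] {K : Set X} (hK : IsCompact K)
    {f : X → ℝ} (hf : ContinuousOn f K) {a : ℝ} (hlt : ∀ x ∈ K, f x < a) :
    ∃ c : ℝ, 0 < c ∧ ∀ x ∈ K, f x ≤ a - c := by
  rcases K.eq_empty_or_nonempty with rfl | hne
  · exact ⟨1, one_pos, fun x hx => hx.elim⟩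
  · obtain ⟨y, hy, hmax⟩ := hK.exists_isMaxOn hne hf
    exact ⟨a - f y, sub_pos.2 (hlt y hy), fun x hx => by linarith [isMaxOn_iff.1 hmax x hx]⟩

lemma exists_gaussDens_far_le {v δ : ℝ} (hv : 0 < v) (hδ : 0 < δ) :
    ∃ K : ℝ, 0 < K ∧ ∀ {s t : ℝ}, 0 < s → δ * s ≤ |t| → gaussDens v t ≤ K / s / (1 + t ^ 2) := by
  obtain ⟨C, hC, hdecay⟩ := exists_gaussDens_decay hv
  refine ⟨C / δ, by positivity, fun {s t} hs ht => ?_⟩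
  have hcubic : δ * s ≤ 1 + |t| ^ 3 := by
    nlinarith [sq_nonneg (|t| - 1), abs_nonneg t]
  have hle := (mul_le_mul_of_nonneg_right hcubic (gaussDens_nonneg v t)).trans (hdecay t)
  calc gaussDens v t = δ * s * gaussDens v t / (δ * s) := by field_simp
    _ ≤ C / (1 + t ^ 2) / (δ * s) := by gcongr
    _ = _ := by field_simp

lemma sqrt_mul_monDens_sub {N j : ℕ} (hN : N ≠ 0) (hj : 2 * j ≤ N) (m : ℝ) :
    √N * (monDens N j - m) = √N * (1 - m) - 2 / √N * j := by
  have hs : √(N : ℝ) ≠ 0 := (sqrt_pos.2 (Nat.cast_pos.2 (Nat.pos_of_ne_zero hN))).ne'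
  have hj2 := natCast_mul_one_sub_monDens hN hj
  rw [← sq_sqrt N.cast_nonneg] at hj2
  field_simp
  linarith

lemma div_mul_sq_le {v s : ℝ} (hv : 0 ≤ v) (hs : 1 ≤ s) (q : ℝ) :
    v / (s * q) ^ 2 ≤ v / q ^ 2 * (2 / s) := by
  have hinv : 1 / s ^ 2 ≤ 2 / s := by
    rw [div_le_div_iff₀ (by positivity) (by positivity)]
    nlinarith
  calc v / (s * q) ^ 2 = v / q ^ 2 * (1 / s ^ 2) := by
        rw [mul_pow, mul_comm, ← div_div, div_eq_mul_one_div]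
    _ ≤ v / q ^ 2 * (2 / s) := by gcongr

lemma half_add_one_mul_sq_le {N : ℕ} (hN : N ≠ 0) :
    ((N / 2 + 1 : ℕ) : ℝ) * (2 / √N) ^ 2 ≤ 6 := by
  have hN' : (0 : ℝ) < N := Nat.cast_pos.2 (Nat.pos_of_ne_zero hN)
  have hcard : ((N / 2 + 1 : ℕ) : ℝ) * 4 ≤ 6 * N := by
    exact_mod_cast (by lia : (N / 2 + 1) * 4 ≤ 6 * N)
  rw [div_pow, sq_sqrt hN'.le, ← mul_div_assoc, div_le_iff₀ hN']
  linarith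

lemma sqrt_le_two_div_sqrt_mul {N : ℕ} (hN : N ≠ 0) :
    √N ≤ 2 / √N * (N / 2 + 1 : ℕ) := by
  have hN' : (0 : ℝ) < N := Nat.cast_pos.2 (Nat.pos_of_ne_zero hN)
  have hcard : (N : ℝ) ≤ 2 * (N / 2 + 1 : ℕ) := by exact_mod_cast (by lia : N ≤ 2 * (N / 2 + 1))
  rwa [div_mul_eq_mul_div, le_div_iff₀ (sqrt_pos.2 hN'), mul_self_sqrt hN'.le]

lemma gaussCDF_lattice_end_le {v m : ℝ} (hv : 0 ≤ v) (hm : 0 < m) {N : ℕ} (hN : N ≠ 0) :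
    gaussCDF v (√N * (1 - m) - 2 / √N * (N / 2 + 1 : ℕ)) ≤ v / m ^ 2 * (2 / √N) := by
  have hs : 1 ≤ √(N : ℝ) := one_le_sqrt.2 (Nat.one_le_cast.2 (Nat.pos_of_ne_zero hN))
  have hend : √N * (1 - m) - 2 / √N * (N / 2 + 1 : ℕ) ≤ -(√N * m) := by
    linarith [sqrt_le_two_div_sqrt_mul hN]
  calc gaussCDF v (√N * (1 - m) - 2 / √N * (N / 2 + 1 : ℕ))
      ≤ gaussCDF v (-(√N * m)) := by
        rw [gaussCDF_eq_cdf]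
        exact monotone_cdf _ hend
    _ ≤ v / (√N * m) ^ 2 := gaussCDF_neg_le hv (by positivity)
    _ ≤ v / m ^ 2 * (2 / √N) := div_mul_sq_le hv hs m

section LocalLimit

variable {J h m : ℝ} {S : Set ℝ} (hm : m ∈ Set.Ioo (0 : ℝ) 1) (hS : S ∈ 𝓝 m)
  (hpeak : ∀ x ∈ Set.Icc (0 : ℝ) 1 ∩ closure S, x ≠ m → rateFun J h x < rateFun J h m)

include hpeak in
lemma exists_rateFun_gap {δ : ℝ} (hδ : 0 < δ) :
    ∃ c : ℝ, 0 < c ∧ ∀ x ∈ Set.Icc (0 : ℝ) 1 ∩ S, δ ≤ |x - m| →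
      rateFun J h x ≤ rateFun J h m - c := by
  have hclosed : IsClosed {x : ℝ | δ ≤ |x - m|} :=
    isClosed_le continuous_const (by fun_prop)
  obtain ⟨c, hc, hgap⟩ := exists_pos_forall_le_sub
    ((isCompact_Icc.inter_right isClosed_closure).inter_right hclosed)
    (continuous_rateFun J h).continuousOn fun x hx => hpeak x hx.1 fun hxm => by
      have hx2 : δ ≤ |x - m| := hx.2
      rw [hxm, sub_self, abs_zero] at hx2
      exact hδ.not_ge hx2
  exact ⟨c, hc, fun x hx hδx => hgap x ⟨⟨hx.1, subset_closure hx.2⟩, hδx⟩⟩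

include hm hpeak in
lemma exists_exp_logWeight_far {δ : ℝ} (hδ : 0 < δ) :
    ∃ K : ℝ, 0 < K ∧ ∀ N j : ℕ, N ≠ 0 → monDens N j ∈ S → δ ≤ |monDens N j - m| →
      rexp (logWeight J h m N j) ≤ K / N := by
  obtain ⟨c, hc, hgap⟩ := exists_rateFun_gap hpeak hδ
  refine ⟨2 * π * (2 / c ^ 2), by positivity, fun N j hN hxS hδx => ?_⟩
  have hN' : (0 : ℝ) < N := Nat.cast_pos.2 (Nat.pos_of_ne_zero hN)
  have hdecay := pow_mul_exp_neg_le hc hN'.le 2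
  calc rexp (logWeight J h m N j)
      ≤ 2 * π * N * rexp (N * (rateFun J h (monDens N j) - rateFun J h m)) :=
        exp_logWeight_le J h hm hN j
    _ ≤ 2 * π * N * rexp (-(c * N)) := by
        gcongr
        nlinarith [hgap _ ⟨monDens_mem_Icc N j, hxS⟩ hδx]
    _ = 2 * π * (N ^ 2 * rexp (-(c * N))) / N := by field_simp
    _ ≤ 2 * π * (2 / c ^ 2) / N := by gcongr; exact hdecay

/-- The weights of the configurations with monomer density in `S`, normalized so as to approximate
a Gaussian density with variance `v` near the density `m`. -/
noncomputable def localWeight (v J h m : ℝ) (S : Set ℝ) (N j : ℕ) : ℝ :=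
  S.indicator (fun _ => (√(2 * π * v))⁻¹ * rexp (logWeight J h m N j)) (monDens N j)

lemma localWeight_nonneg (v J h m : ℝ) (S : Set ℝ) (N j : ℕ) : 0 ≤ localWeight v J h m S N j :=
  Set.indicator_nonneg (fun _ _ => by positivity) _

variable {v : ℝ} (hv : v⁻¹ = m⁻¹ + (1 - m)⁻¹ / 2 - 2 * J) (hv0 : 0 < v)

include hm hS hpeak hv hv0 in
lemma exists_localWeight_near :
    ∃ K δ : ℝ, 0 < K ∧ 0 < δ ∧ ∀ N j : ℕ, N ≠ 0 → 2 * j ≤ N → |monDens N j - m| < δ →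
      |localWeight v J h m S N j - gaussDens v (√N * (monDens N j - m))| ≤
        K / √N / (1 + (√N * (monDens N j - m)) ^ 2) := by
  have hmax : IsLocalMax (rateFun J h) m := by
    filter_upwards [hS, Ioo_mem_nhds hm.1 hm.2] with x hxS hx
    rcases eq_or_ne x m with rfl | hxm
    · exact le_rfl
    · exact (hpeak x ⟨Set.Ioo_subset_Icc_self hx, subset_closure hxS⟩ hxm).le
  obtain ⟨K, hK, hnear⟩ := exists_exp_logWeight_near J h hm hmax hv (inv_pos.2 hv0)
  obtain ⟨δ, hδ, hball⟩ := Metric.eventually_nhds_iff.1 (hnear.and hS)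
  refine ⟨(√(2 * π * v))⁻¹ * K, δ, by positivity, hδ, fun N j hN hj hx => ?_⟩
  obtain ⟨hexp, hxS⟩ := hball hx
  have hdens : -(√N * (monDens N j - m)) ^ 2 / (2 * v) =
      -(v⁻¹ / 2 * (√N * (monDens N j - m)) ^ 2) := by field_simp
  rw [localWeight, Set.indicator_of_mem hxS, gaussDens, hdens, ← mul_sub, abs_mul,
    abs_of_nonneg (by positivity), mul_div_assoc, mul_div_assoc]
  exact mul_le_mul_of_nonneg_left (hexp N j hN hj rfl) (by positivity)

include hm hS hpeak hv hv0 in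
lemma exists_localWeight_bound :
    ∃ K : ℝ, 0 < K ∧ ∀ N j : ℕ, N ≠ 0 → 2 * j ≤ N →
      |localWeight v J h m S N j - gaussDens v (√N * (monDens N j - m))| ≤
        K / √N / (1 + (√N * (monDens N j - m)) ^ 2) + K / N := by
  obtain ⟨K₁, δ, hK₁, hδ, hnear⟩ := exists_localWeight_near hm hS hpeak hv hv0
  obtain ⟨K₂, hK₂, hfar⟩ := exists_exp_logWeight_far hm hpeak hδ
  obtain ⟨K₃, hK₃, htail⟩ := exists_gaussDens_far_le hv0 hδ
  set σ := (√(2 * π * v))⁻¹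
  have hσ : 0 < σ := by positivity
  refine ⟨K₁ + K₃ + σ * K₂, by positivity, fun N j hN hj => ?_⟩
  have hs : 0 < √(N : ℝ) := sqrt_pos.2 (Nat.cast_pos.2 (Nat.pos_of_ne_zero hN))
  set t := √N * (monDens N j - m)
  rcases lt_or_ge |monDens N j - m| δ with hx | hx
  · calc _ ≤ K₁ / √N / (1 + t ^ 2) := hnear N j hN hj hx
      _ ≤ (K₁ + K₃ + σ * K₂) / √N / (1 + t ^ 2) := by
          gcongr
          nlinarith
      _ ≤ _ := le_add_of_nonneg_right (by positivity)
  · have hdens : gaussDens v t ≤ K₃ / √N / (1 + t ^ 2) := htail hs (by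
      rw [abs_mul, abs_of_pos hs, mul_comm]
      gcongr)
    have hweight : localWeight v J h m S N j ≤ σ * K₂ / N :=
      Set.indicator_apply_le' (fun hxS => by
        rw [mul_div_assoc]
        exact mul_le_mul_of_nonneg_left (hfar N j hN hxS hx) hσ.le) (fun _ => by positivity)
    have hlarger : K₃ / √N / (1 + t ^ 2) + σ * K₂ / N ≤
        (K₁ + K₃ + σ * K₂) / √N / (1 + t ^ 2) + (K₁ + K₃ + σ * K₂) / N := by
      gcongr <;> nlinarith
    have hweight_nonneg := localWeight_nonneg v J h m S N j
    have hdens_nonneg := gaussDens_nonneg v t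
    have hK₂_nonneg : 0 ≤ σ * K₂ / N := by positivity
    have hK₃_nonneg : 0 ≤ K₃ / √N / (1 + t ^ 2) := by positivity
    rw [abs_le]
    constructor <;> linarith [hK₂_nonneg, hK₃_nonneg]

include hm hS hpeak hv hv0 in
lemma exists_isGaussianLattice_localWeight :
    ∃ M : ℝ, ∀ N : ℕ, N ≠ 0 →
      IsGaussianLattice v M (2 / √N) (√N * (1 - m)) (N / 2 + 1) (localWeight v J h m S N) := by
  obtain ⟨K, hK, hweight⟩ := exists_localWeight_bound hm hS hpeak hv hv0
  have hm1 : 0 < 1 - m := sub_pos.2 hm.2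
  refine ⟨6 + K + v / m ^ 2 + v / (1 - m) ^ 2, fun N hN => ?_⟩
  have hs : 1 ≤ √(N : ℝ) := one_le_sqrt.2 (Nat.one_le_cast.2 (Nat.pos_of_ne_zero hN))
  have hmesh : 0 < 2 / √(N : ℝ) := by positivity
  have hv1 : 0 ≤ v / m ^ 2 := by positivity
  have hv2 : 0 ≤ v / (1 - m) ^ 2 := by positivity
  refine ⟨hmesh, (div_le_iff₀ (by positivity)).2 (by linarith), ?_,
    fun j _ => localWeight_nonneg v J h m S N j, fun j hj => ?_, ?_, ?_⟩
  · linarith [half_add_one_mul_sq_le hN]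
  · have hj' : 2 * j ≤ N := by lia
    rw [← sqrt_mul_monDens_sub hN hj']
    set t := √N * (monDens N j - m)
    calc _ ≤ K / √N / (1 + t ^ 2) + K / N := hweight N j hN hj'
      _ = K * (1 / √N / (1 + t ^ 2) + 1 / N) := by ring
      _ ≤ (6 + K + v / m ^ 2 + v / (1 - m) ^ 2) * (2 / √N / (1 + t ^ 2) + (2 / √N) ^ 2) := by
          rw [div_pow 2 (√(N : ℝ)), sq_sqrt N.cast_nonneg]
          gcongr <;> linarith
  · refine (gaussCDF_lattice_end_le hv0.le hm.1 hN).trans ?_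
    gcongr
    linarith
  · refine (one_sub_gaussCDF_le hv0.le (by positivity)).trans
      ((div_mul_sq_le hv0.le hs (1 - m)).trans ?_)
    gcongr
    linarith

end LocalLimit

/-! ### Conditional central limit theorem -/

lemma sum_indicator_wDim (N : ℕ) (J h : ℝ) (T : Set ℝ) :
    ∑ D : Dimer N, Set.indicator {D | mDim D ∈ T} (wDim N J h) D =
      ∑ j ∈ range (N / 2 + 1), T.indicator (fun _ => gibbsWeight N J h j) (monDens N j) := by
  classical
  have hcount := sum_comp_card_monomers (N := N) fun k =>
    T.indicator (fun x => rexp (N * (J * x ^ 2 + bIMD N J h * x))) ((k : ℝ) / N)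
  simp only [Set.indicator_apply, mul_ite, mul_zero] at hcount
  simp only [Set.indicator_apply, Set.mem_ofPred_eq, wDim, mDim, gibbsWeight, monDens]
  exact hcount

lemma exists_sum_indicator_wDim_eq_mul {v : ℝ} (hv : 0 < v) (J h m : ℝ) {N : ℕ} (hN : N ≠ 0) :
    ∃ A : ℝ, 0 < A ∧ ∀ T : Set ℝ,
      ∑ D : Dimer N, Set.indicator {D | mDim D ∈ T} (wDim N J h) D =
        A * ∑ j ∈ range (N / 2 + 1), localWeight v J h m T N j := by
  classical
  obtain ⟨A, hA, hweight⟩ := exists_gibbsWeight_eq_mul_exp_logWeight J h m hN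
  refine ⟨A * √(2 * π * v), by positivity, fun T => ?_⟩
  rw [sum_indicator_wDim, mul_sum]
  refine sum_congr rfl fun j hj => ?_
  have hj' : 2 * j ≤ N := by rw [mem_range] at hj; lia
  simp only [localWeight, Set.indicator_apply, hweight j hj', mul_ite, mul_zero]
  congr 1
  field_simp

lemma condProbDim_eq_localWeight_div {v : ℝ} (hv : 0 < v) (J h m : ℝ) {N : ℕ} (hN : N ≠ 0)
    (S : Set ℝ) (z : ℝ) :
    condProbDim N J h (fun D => ((#(monomers D) : ℝ) - N * m) / √N ≤ z) (fun D => mDim D ∈ S) =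
      (∑ j ∈ range (N / 2 + 1) with √N * (1 - m) - 2 / √N * (j : ℕ) ≤ z,
        localWeight v J h m S N j) / ∑ j ∈ range (N / 2 + 1), localWeight v J h m S N j := by
  classical
  obtain ⟨A, hA, hsum⟩ := exists_sum_indicator_wDim_eq_mul hv J h m hN
  have hs : √(N : ℝ) ≠ 0 := (sqrt_pos.2 (Nat.cast_pos.2 (Nat.pos_of_ne_zero hN))).ne'
  have hevent : {D : Dimer N | ((#(monomers D) : ℝ) - N * m) / √N ≤ z ∧ mDim D ∈ S} =
      {D | mDim D ∈ {x | √N * (x - m) ≤ z ∧ x ∈ S}} := by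
    ext D
    have hcenter : ((#(monomers D) : ℝ) - N * m) / √N = √N * (mDim D - m) := by
      rw [mDim, div_eq_iff hs, mul_right_comm, mul_self_sqrt N.cast_nonneg]
      field_simp
    simp only [Set.mem_ofPred_eq, hcenter]
  rw [condProbDim, hevent, hsum, hsum, mul_div_mul_left _ _ hA.ne', sum_filter]
  congr 1
  refine sum_congr rfl fun j hj => ?_
  have hj' : 2 * j ≤ N := by rw [mem_range] at hj; lia
  simp only [localWeight, Set.indicator_apply, Set.mem_ofPred_eq, sqrt_mul_monDens_sub hN hj',
    ite_and]

theorem stmt2_general {J h m : ℝ} (hfix : m = gFun (tauFun J h m))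
    (hc : iteratedDeriv 2 (ptilde J h) m < 0) {S : Set ℝ} (hS : S ∈ 𝓝 m)
    (hpeak : ∀ x ∈ Set.Icc (0 : ℝ) 1 ∩ closure S, x ≠ m → ptilde J h x < ptilde J h m) :
    0 < limitVar J h m ∧ ∃ K : ℝ, ∀ N : ℕ, 1 ≤ N → ∀ z : ℝ,
      |condProbDim N J h (fun D => ((#(monomers D) : ℝ) - N * m) / √N ≤ z) (fun D => mDim D ∈ S)
        - gaussCDF (limitVar J h m) z| ≤ K / √N := by
  obtain ⟨hκ, hvar⟩ := curvature_pos_and_limitVar_eq hc hfix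
  have hv : 0 < limitVar J h m := hvar ▸ inv_pos.2 hκ
  have hm : m ∈ Set.Ioo (0 : ℝ) 1 := by
    rw [hfix]
    exact ⟨gFun_pos _, gFun_lt_one _⟩
  have hrate : ∀ x ∈ Set.Icc (0 : ℝ) 1 ∩ closure S, x ≠ m → rateFun J h x < rateFun J h m :=
    fun x hx hxm => (rateFun_le_ptilde J h hx.1).trans_lt
      ((hpeak x hx hxm).trans_eq (rateFun_eq_ptilde hfix).symm)
  obtain ⟨M, hlattice⟩ :=
    exists_isGaussianLattice_localWeight hm hS hrate (by rw [hvar, inv_inv]) hv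
  obtain ⟨C, hratio⟩ := exists_lattice_ratio_bound hv M
  refine ⟨hv, C * 2, fun N hN z => ?_⟩
  have hN0 : N ≠ 0 := Nat.one_le_iff_ne_zero.1 hN
  rw [condProbDim_eq_localWeight_div hv J h m hN0, mul_div_assoc]
  exact hratio (hlattice N hN0) z

/-- Conditional CLTs along the critical line: if `𝑝̃` has exactly two
maximizers `m₁ < m₂` (each a fixed point of `g ∘ τ` with `𝑝̃'' < 0`), `ξ ∈ (m₁, m₂)`,
and `liminf ℙ(𝒟_ℓ) > 0`, then `λ_ℓ > 0` and given `𝒟_ℓ`, `(|𝓜(D)| - N m_ℓ)/√N` is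
within Kolmogorov distance `K/√N` of `N(0, λ_ℓ)`. -/
theorem stmt2 (J h : ℝ) (hJ : 0 ≤ J) (m1 m2 : ℝ)
    (hm1 : m1 ∈ Set.Icc (0:ℝ) 1) (hm2 : m2 ∈ Set.Icc (0:ℝ) 1) (h12 : m1 < m2)
    (hmax1 : ∀ m ∈ Set.Icc (0:ℝ) 1, ptilde J h m ≤ ptilde J h m1)
    (heq : ptilde J h m2 = ptilde J h m1)
    (honly : ∀ m ∈ Set.Icc (0:ℝ) 1,
      (∀ m' ∈ Set.Icc (0:ℝ) 1, ptilde J h m' ≤ ptilde J h m) → m = m1 ∨ m = m2)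
    (hfix1 : m1 = gFun (tauFun J h m1)) (hfix2 : m2 = gFun (tauFun J h m2))
    (hc1 : iteratedDeriv 2 (ptilde J h) m1 < 0)
    (hc2 : iteratedDeriv 2 (ptilde J h) m2 < 0)
    (ξ : ℝ) (hξ : ξ ∈ Set.Ioo m1 m2)
    (hlim1 : 0 < Filter.liminf (fun N : ℕ => probDim N J h (fun D => mDim D < ξ)) Filter.atTop)
    (hlim2 : 0 < Filter.liminf (fun N : ℕ => probDim N J h (fun D => ξ < mDim D)) Filter.atTop) :
    (0 < -(iteratedDeriv 2 (ptilde J h) m1)⁻¹ - (2*J)⁻¹ ∧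
      ∃ K : ℝ, ∀ N : ℕ, 1 ≤ N → ∀ z : ℝ,
        |condProbDim N J h
            (fun D => (((monomers D).card : ℝ) - N * m1) / Real.sqrt N ≤ z)
            (fun D => mDim D < ξ)
          - gaussCDF (-(iteratedDeriv 2 (ptilde J h) m1)⁻¹ - (2*J)⁻¹) z|
        ≤ K / Real.sqrt N) ∧
    (0 < -(iteratedDeriv 2 (ptilde J h) m2)⁻¹ - (2*J)⁻¹ ∧
      ∃ K : ℝ, ∀ N : ℕ, 1 ≤ N → ∀ z : ℝ,
        |condProbDim N J h
            (fun D => (((monomers D).card : ℝ) - N * m2) / Real.sqrt N ≤ z)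
            (fun D => ξ < mDim D)
          - gaussCDF (-(iteratedDeriv 2 (ptilde J h) m2)⁻¹ - (2*J)⁻¹) z|
        ≤ K / Real.sqrt N) := by
  have hstrict : ∀ x ∈ Set.Icc (0 : ℝ) 1, x ≠ m1 → x ≠ m2 → ptilde J h x < ptilde J h m1 := by
    refine fun x hx hx1 hx2 => (hmax1 x hx).lt_of_ne fun hxm => ?_
    exact (honly x hx fun y hy => (hmax1 y hy).trans_eq hxm.symm).elim hx1 hx2
  have hpeak1 : ∀ x ∈ Set.Icc (0 : ℝ) 1 ∩ closure (Set.Iio ξ), x ≠ m1 →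
      ptilde J h x < ptilde J h m1 := fun x hx hxm =>
    hstrict x hx.1 hxm (((closure_Iio ξ).subset hx.2 : x ≤ ξ).trans_lt hξ.2).ne
  have hpeak2 : ∀ x ∈ Set.Icc (0 : ℝ) 1 ∩ closure (Set.Ioi ξ), x ≠ m2 →
      ptilde J h x < ptilde J h m2 := fun x hx hxm =>
    heq ▸ hstrict x hx.1 (hξ.1.trans_le ((closure_Ioi ξ).subset hx.2 : ξ ≤ x)).ne' hxm
  simpa only [limitVar, Set.mem_Iio, Set.mem_Ioi] using
    And.intro (stmt2_general hfix1 hc1 (Iio_mem_nhds hξ.1) hpeak1)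
      (stmt2_general hfix2 hc2 (Ioi_mem_nhds hξ.2) hpeak2)
end

section
/- Let σ be drawn from the weighted Curie–Weiss Gibbs measure and let (σ,σ') be the exchangeable pair obtained by resampling the spins at a uniformly chosen edge. Then E[M − M' | σ] = L₁(m(σ)) + R₁(m(σ)), where R₁ is a function on [0,1] satisfying |R₁(m)| ≤ K/N for all m ∈ [0,1], for a constant K depending only on (J,h) and not on N. -/
open Real Finset MeasureTheory

/-!
The number of monomers has the parity of `N`. Hence, given the other spins, a resampled pair either
keeps two different spins, so that `M' = M`, or becomes `00` or `11`. Let `r` be the number of ones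
away from the pair. Sorting the dimer configurations counted by `00` according to the partner of
one of the two vertices shows that there are `N - r - 1` times as many of them as for `11`; together
with the `(log N) / 2` in `b`, this gives the two outcomes weights in the ratio
`(1 - x) : e^{2τ(x)}`, where `x = (r + 1) / N`. So `00` has conditional probability
`p(x) = (1 - x) / ((1 - x) + e^{2τ(x)})`, and averaging over the edge yields, with `m = M / N`,
`E[M - M' | σ] = 2 [C(M, 2) / C(N, 2) p(m - 1/N) - C(N - M, 2) / C(N, 2) (1 - p(m + 1/N))]`.
On the other hand `L₁(m) = 2 [m² p(m) - (1 - m)² (1 - p(m))]`. Since `p` is Lipschitz on `[0, 1]`,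
the two differ by `O(1/N)`.
-/

namespace Dimer

variable {N : ℕ}

/-- Relabelling the vertices of a dimer configuration by a permutation. -/
def relabel (e : Equiv.Perm (Fin N)) : Dimer N ≃ Dimer N where
  toFun D := ⟨e ∘ D.1 ∘ e.symm, fun i => by simp [D.2]⟩
  invFun D := ⟨e.symm ∘ D.1 ∘ e, fun i => by simp [D.2]⟩
  left_inv D := by ext; simp
  right_inv D := by ext; simp

lemma monomers_relabel (e : Equiv.Perm (Fin N)) (D : Dimer N) :
    monomers (relabel e D) = (monomers D).map e.toEmbedding := by
  ext i
  simp [monomers, relabel, ← Equiv.eq_symm_apply]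

/-- Composition with the transposition of `u` and `v`: this removes the dimer `{u, v}` if it is
present, and adds it if `u` and `v` are both monomers. -/
def toggle (D : Dimer N) (u v : Fin N)
    (hD : ∀ i, D.1 (Equiv.swap u v i) = Equiv.swap u v (D.1 i)) : Dimer N :=
  ⟨fun i => Equiv.swap u v (D.1 i), fun i => by simp [hD, D.2]⟩

lemma apply_swap_of_apply_eq {D : Dimer N} {u v : Fin N} (huv : D.1 u = v) (i : Fin N) :
    D.1 (Equiv.swap u v i) = Equiv.swap u v (D.1 i) := by
  have hu := D.2 u
  have hi := D.2 i
  grind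

lemma apply_swap_of_mem_monomers {D : Dimer N} {u v : Fin N} (hu : u ∈ monomers D)
    (hv : v ∈ monomers D) (i : Fin N) :
    D.1 (Equiv.swap u v i) = Equiv.swap u v (D.1 i) := by
  have hi := D.2 i
  simp only [monomers, mem_filter, mem_univ, true_and] at hu hv
  grind

lemma monomers_toggle_of_apply_eq {D : Dimer N} {u v : Fin N} (huv : D.1 u = v) :
    monomers (D.toggle u v (apply_swap_of_apply_eq huv)) = insert u (insert v (monomers D)) := by
  have hu := D.2 u
  ext i
  have := D.2 i
  simp only [monomers, toggle, mem_filter, mem_univ, true_and, mem_insert]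
  grind

lemma monomers_toggle_of_mem_monomers {D : Dimer N} {u v : Fin N} (hu : u ∈ monomers D)
    (hv : v ∈ monomers D) (huv : u ≠ v) :
    monomers (D.toggle u v (apply_swap_of_mem_monomers hu hv)) =
      ((monomers D).erase u).erase v := by
  ext i
  have := D.2 i
  simp only [monomers, toggle, mem_filter, mem_univ, true_and, mem_erase] at hu hv ⊢
  grind

lemma card_monomers_modEq (D : Dimer N) : N ≡ #(monomers D) [MOD 2] := by
  have h := Equiv.Perm.card_fixedPoints_modEq (f := (D.1 : Function.End (Fin N))) (p := 2) (n := 1)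
    (funext D.2)
  rwa [Fintype.card_fin, Fintype.card_subtype] at h

end Dimer

/-- The dimer configurations whose set of monomers is `S`. -/
def dimersWithMonomers {N : ℕ} (S : Finset (Fin N)) : Finset (Dimer N) := {D | monomers D = S}

section DimerCount

variable {N : ℕ} {S T : Finset (Fin N)} {u v : Fin N}

lemma mem_dimersWithMonomers {D : Dimer N} : D ∈ dimersWithMonomers S ↔ monomers D = S := by
  simp [dimersWithMonomers]

lemma card_dimersWithMonomers_congr (hST : #S = #T) :
    #(dimersWithMonomers S) = #(dimersWithMonomers T) := by
  obtain ⟨e, rfl⟩ := Equiv.Perm.exists_map_finset_eq S T hST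
  refine Finset.card_equiv (Dimer.relabel e) fun D => ?_
  rw [mem_dimersWithMonomers, mem_dimersWithMonomers, Dimer.monomers_relabel, Finset.map_inj]

lemma card_filter_apply_eq (hu : u ∉ S) (hv : v ∉ S) (huv : u ≠ v) :
    #{D ∈ dimersWithMonomers S | D.1 u = v} = #(dimersWithMonomers (insert u (insert v S))) := by
  have mem_left {D : Dimer N} (hD : D ∈ {D ∈ dimersWithMonomers S | D.1 u = v}) :
      monomers D = S ∧ D.1 u = v := by
    simpa only [mem_filter, mem_dimersWithMonomers] using hD
  have mem_right {D : Dimer N} (hD : D ∈ dimersWithMonomers (insert u (insert v S))) :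
      u ∈ monomers D ∧ v ∈ monomers D := by
    rw [mem_dimersWithMonomers.1 hD]
    simp
  refine Finset.card_bij'
    (fun D hD => D.toggle u v (Dimer.apply_swap_of_apply_eq (mem_left hD).2))
    (fun D hD => D.toggle u v
      (Dimer.apply_swap_of_mem_monomers (mem_right hD).1 (mem_right hD).2))
    (fun D hD => ?_) (fun D hD => ?_) (fun D _ => ?_) (fun D _ => ?_)
  · obtain ⟨hDS, hDuv⟩ := mem_left hD
    rw [mem_dimersWithMonomers, Dimer.monomers_toggle_of_apply_eq hDuv, hDS]
  · obtain ⟨hDu, hDv⟩ := mem_right hD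
    rw [mem_filter, mem_dimersWithMonomers, Dimer.monomers_toggle_of_mem_monomers hDu hDv huv]
    have hDS := mem_dimersWithMonomers.1 hD
    have hDuu : D.1 u = u := (mem_filter.1 hDu).2
    exact ⟨by grind, by simp [Dimer.toggle, hDuu]⟩
  · ext i
    simp [Dimer.toggle]
  · ext i
    simp [Dimer.toggle]

/-- Sorting the configurations by the dimer partner of `u`, each of the `N - #S - 1` possible
partners contributes equally. -/
lemma card_dimersWithMonomers_eq_mul (hu : u ∉ S) (hv : v ∉ S) (huv : u ≠ v) :
    #(dimersWithMonomers S) =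
      (N - #S - 1) * #(dimersWithMonomers (insert u (insert v S))) := by
  have partner_mem : ∀ D ∈ dimersWithMonomers S, D.1 u ∈ Sᶜ.erase u := by
    intro D hD
    obtain rfl := mem_dimersWithMonomers.1 hD
    have := D.2 u
    simp only [monomers, mem_filter, mem_univ, true_and, mem_erase, mem_compl] at hu ⊢
    grind
  have card_partners : #(Sᶜ.erase u) = N - #S - 1 := by
    rw [card_erase_of_mem (mem_compl.2 hu), card_compl, Fintype.card_fin]
  rw [card_eq_sum_card_fiberwise partner_mem, ← card_partners]
  refine sum_const_nat fun w hw => ?_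
  obtain ⟨hwu, hwS⟩ := mem_erase.1 hw
  rw [mem_compl] at hwS
  rw [card_filter_apply_eq hu hwS hwu.symm]
  exact card_dimersWithMonomers_congr (by grind)

end DimerCount

section Spins

variable {N : ℕ} (σ : Config N) {u v : Fin N}

/-- The number of ones of `σ` away from the edge `{u, v}`. -/
def offEdgeSum (u v : Fin N) : ℕ := ∑ i ∈ {u, v}ᶜ, (σ i).toNat

lemma Msum_eq_sum : Msum σ = ∑ i, (σ i).toNat := by
  rw [Msum, ASet, card_filter]
  exact sum_congr rfl fun i _ => by cases σ i <;> rfl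

lemma Msum_upd (huv : u ≠ v) (s t : Bool) :
    Msum (upd σ u v s t) = offEdgeSum σ u v + s.toNat + t.toNat := by
  have off_edge : ∑ i ∈ {u, v}ᶜ, (upd σ u v s t i).toNat = offEdgeSum σ u v := by
    refine sum_congr rfl fun i hi => ?_
    simp only [mem_compl, mem_insert, mem_singleton, not_or] at hi
    simp [upd, hi]
  rw [Msum_eq_sum, ← sum_compl_add_sum {u, v}, off_edge, sum_pair huv, ← add_assoc]
  simp [upd, huv.symm]

lemma upd_self (u v : Fin N) : upd σ u v (σ u) (σ v) = σ := by
  funext i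
  unfold upd
  grind

lemma Msum_eq_offEdgeSum_add (huv : u ≠ v) :
    Msum σ = offEdgeSum σ u v + (σ u).toNat + (σ v).toNat := by
  rw [← Msum_upd σ huv, upd_self]

lemma ASet_upd_true_true (u v : Fin N) :
    ASet (upd σ u v true true) = insert u (insert v (ASet (upd σ u v false false))) := by
  ext i
  simp only [ASet, upd, mem_insert]
  grind

lemma Msum_le : Msum σ ≤ N := by
  simpa [Msum] using Finset.card_le_univ (ASet σ)

lemma offEdgeSum_add_two_le (huv : u ≠ v) : offEdgeSum σ u v + 2 ≤ N := by
  have h := Msum_le (upd σ u v true true)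
  rwa [Msum_upd σ huv, Bool.toNat_true, add_assoc] at h

end Spins

/-- The probability `(1 - x) / ((1 - x) + e^{2τ(x)})` that a resampled pair of spins becomes `00`
rather than `11`, where `N x - 1` of the other spins are equal to `1`. -/
noncomputable def vacancyProb (J h x : ℝ) : ℝ :=
  (1 - x) / ((1 - x) + exp (2 * tauFun J h x))

section Resampling

variable {N : ℕ} {J h : ℝ} {σ : Config N} {u v : Fin N}

/-- The factor `N` is produced by the `(log N) / 2` in `bIMD`. -/
lemma exp_energy_add_two (J h r : ℝ) (hN : N ≠ 0) :
    exp (N * (J * ((r + 2) / N) ^ 2 + bIMD N J h * ((r + 2) / N))) =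
      exp (N * (J * (r / N) ^ 2 + bIMD N J h * (r / N))) *
        (N * exp (2 * tauFun J h ((r + 1) / N))) := by
  have factor_eq : N * exp (2 * tauFun J h ((r + 1) / N)) =
      exp (log N + 2 * tauFun J h ((r + 1) / N)) := by
    rw [Real.exp_add, Real.exp_log (by positivity)]
  rw [factor_eq, ← Real.exp_add]
  congr 1
  unfold bIMD tauFun
  field_simp
  ring

lemma Dcount_upd_false_false (σ : Config N) (huv : u ≠ v) :
    (Dcount N (upd σ u v false false) : ℝ) =
      (N - (offEdgeSum σ u v + 1)) * Dcount N (upd σ u v true true) := by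
  have hcard : #(ASet (upd σ u v false false)) = offEdgeSum σ u v := Msum_upd σ huv false false
  have hle := offEdgeSum_add_two_le σ huv
  have hD : Dcount N (upd σ u v false false) =
      (N - (offEdgeSum σ u v + 1)) * Dcount N (upd σ u v true true) := by
    have := card_dimersWithMonomers_eq_mul (S := ASet (upd σ u v false false))
      (by simp [ASet, upd]) (by simp [ASet, upd]) huv
    rwa [hcard, ← ASet_upd_true_true, Nat.sub_sub] at this
  rw [hD, Nat.cast_mul, Nat.cast_sub (by omega), Nat.cast_succ]

lemma wConf_upd_false_false_mul_exp (J h : ℝ) (σ : Config N) (huv : u ≠ v) :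
    wConf N J h (upd σ u v false false) *
        exp (2 * tauFun J h ((offEdgeSum σ u v + 1) / N)) =
      (1 - (offEdgeSum σ u v + 1) / N) * wConf N J h (upd σ u v true true) := by
  have hN : N ≠ 0 := by have := offEdgeSum_add_two_le σ huv; omega
  have hff : (Msum (upd σ u v false false) : ℝ) = offEdgeSum σ u v := by simp [Msum_upd σ huv]
  have htt : (Msum (upd σ u v true true) : ℝ) = offEdgeSum σ u v + 2 := by
    rw [Msum_upd σ huv]
    push_cast [Bool.toNat_true]
    ring
  unfold wConf mConf
  rw [hff, htt, exp_energy_add_two J h _ hN, Dcount_upd_false_false σ huv]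
  field_simp

lemma wConf_nonneg (J h : ℝ) (σ : Config N) : 0 ≤ wConf N J h σ := by
  unfold wConf
  positivity

lemma Msum_modEq_of_wConf_ne_zero (hσ : wConf N J h σ ≠ 0) : N ≡ Msum σ [MOD 2] := by
  have hD : Dcount N σ ≠ 0 := fun h0 => hσ (by simp [wConf, h0])
  obtain ⟨D, hD⟩ := card_ne_zero.1 hD
  rw [Msum, ← (mem_filter.1 hD).2]
  exact D.card_monomers_modEq

lemma wConf_upd_eq_zero (hσ : wConf N J h σ ≠ 0) (huv : u ≠ v) {s t : Bool}
    (hst : s.xor t ≠ (σ u).xor (σ v)) : wConf N J h (upd σ u v s t) = 0 := by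
  by_contra hupd
  have parity := (Msum_modEq_of_wConf_ne_zero hσ).symm.trans (Msum_modEq_of_wConf_ne_zero hupd)
  rw [Msum_eq_offEdgeSum_add σ huv, Msum_upd σ huv, Nat.ModEq] at parity
  cases hu : σ u <;> cases hv : σ v <;> cases s <;> cases t <;>
    simp only [hu, hv, Bool.toNat_true, Bool.toNat_false] at hst parity <;> grind

lemma qCond_eq_zero (hσ : wConf N J h σ ≠ 0) (huv : u ≠ v) {s t : Bool}
    (hst : s.xor t ≠ (σ u).xor (σ v)) : qCond N J h σ u v s t = 0 := by
  rw [qCond, wConf_upd_eq_zero hσ huv hst, zero_div]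

lemma sum_wConf_upd_of_eq (hσ : wConf N J h σ ≠ 0) (huv : u ≠ v) (heq : σ u = σ v) :
    ∑ st : Bool × Bool, wConf N J h (upd σ u v st.1 st.2) =
      wConf N J h (upd σ u v true true) + wConf N J h (upd σ u v false false) := by
  rw [Fintype.sum_prod_type]
  simp only [Fintype.sum_bool]
  rw [wConf_upd_eq_zero hσ huv (s := true) (t := false) (by simp [heq]),
    wConf_upd_eq_zero hσ huv (s := false) (t := true) (by simp [heq])]
  ring

lemma one_sub_offEdgeSum_div_pos (σ : Config N) (huv : u ≠ v) :
    0 < 1 - ((offEdgeSum σ u v : ℝ) + 1) / N := by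
  have hle : offEdgeSum σ u v + 1 < N := offEdgeSum_add_two_le σ huv
  rw [sub_pos, div_lt_one (by exact_mod_cast hle.pos)]
  exact_mod_cast hle

lemma wConf_upd_true_true_ne_zero (hσ : wConf N J h σ ≠ 0) (huv : u ≠ v) (heq : σ u = σ v) :
    wConf N J h (upd σ u v true true) ≠ 0 := by
  intro htt
  have hff := wConf_upd_false_false_mul_exp J h σ huv
  rw [htt, mul_zero, mul_eq_zero, or_iff_left (exp_pos _).ne'] at hff
  have hself := upd_self σ u v
  rw [← heq] at hself
  cases hu : σ u <;> rw [hu] at hself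
  · exact hσ (hself ▸ hff)
  · exact hσ (hself ▸ htt)

lemma qCond_false_false_of_eq (hσ : wConf N J h σ ≠ 0) (huv : u ≠ v) (heq : σ u = σ v) :
    qCond N J h σ u v false false = vacancyProb J h ((offEdgeSum σ u v + 1) / N) := by
  have weight_ratio := wConf_upd_false_false_mul_exp J h σ huv
  have htt := wConf_upd_true_true_ne_zero hσ huv heq
  have hx := one_sub_offEdgeSum_div_pos σ huv
  have hE := exp_pos (2 * tauFun J h ((offEdgeSum σ u v + 1) / N))
  rw [← eq_div_iff hE.ne'] at weight_ratio
  rw [qCond, sum_wConf_upd_of_eq hσ huv heq, vacancyProb, weight_ratio]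
  field_simp
  ring

lemma qCond_true_true_of_eq (hσ : wConf N J h σ ≠ 0) (huv : u ≠ v) (heq : σ u = σ v) :
    qCond N J h σ u v true true = 1 - vacancyProb J h ((offEdgeSum σ u v + 1) / N) := by
  have htt := (wConf_nonneg J h (upd σ u v true true)).lt_of_ne'
    (wConf_upd_true_true_ne_zero hσ huv heq)
  have hff := wConf_nonneg J h (upd σ u v false false)
  rw [eq_sub_iff_add_eq, ← qCond_false_false_of_eq hσ huv heq, qCond, qCond, ← add_div,
    sum_wConf_upd_of_eq hσ huv heq, div_self (add_pos_of_pos_of_nonneg htt hff).ne']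

lemma sum_qCond_mul_Msum_sub (hσ : wConf N J h σ ≠ 0) (huv : u ≠ v) :
    ∑ st : Bool × Bool, qCond N J h σ u v st.1 st.2 *
        ((Msum σ : ℝ) - Msum (upd σ u v st.1 st.2)) =
      (if u ∈ ASet σ ∧ v ∈ ASet σ then 2 * vacancyProb J h ((Msum σ - 1) / N) else 0) -
        if u ∈ (ASet σ)ᶜ ∧ v ∈ (ASet σ)ᶜ then 2 * (1 - vacancyProb J h ((Msum σ + 1) / N))
        else 0 := by
  have hff := qCond_false_false_of_eq hσ huv
  have htt := qCond_true_true_of_eq hσ huv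
  have hzero (s t : Bool) := qCond_eq_zero hσ huv (s := s) (t := t)
  rw [Fintype.sum_prod_type]
  simp only [Fintype.sum_bool, Msum_upd σ huv, Msum_eq_offEdgeSum_add σ huv, ASet, mem_compl,
    mem_filter, mem_univ, true_and]
  cases hu : σ u <;> cases hv : σ v <;> rw [hu, hv] at hff htt hzero
  · rw [hff rfl, hzero true false (by decide), hzero false true (by decide), htt rfl]
    simp only [Bool.toNat_false, add_zero, Bool.toNat_true, Nat.cast_add, Nat.cast_one,
      sub_add_cancel_left, mul_neg, mul_one, neg_zero, sub_self, mul_zero, Bool.false_eq_true,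
      and_self, ↓reduceIte, not_false_eq_true, zero_sub]
    ring
  · rw [hzero true true (by decide), hzero false false (by decide)]
    simp
  · rw [hzero true true (by decide), hzero false false (by decide)]
    simp
  · rw [hff rfl, hzero true false (by decide), hzero false true (by decide)]
    simp only [Bool.toNat_true, Nat.cast_add, Nat.cast_one, sub_self, mul_zero, Bool.toNat_false,
      add_zero, add_sub_cancel_left, mul_one, zero_add, and_self, ↓reduceIte,
      add_sub_cancel_right, not_true_eq_false, sub_zero]
    ring

end Resampling

section ConditionalMoment

variable {N : ℕ}

lemma card_filter_cEdges (S : Finset (Fin N)) :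
    #{p ∈ cEdges N | p.1 ∈ S ∧ p.2 ∈ S} = (#S).choose 2 := by
  rw [← card_product_filter_lt]
  congr 1
  ext p
  simp only [cEdges, mem_filter, mem_univ, true_and, mem_product]
  exact and_comm

/-- The exact value of `E[M - M' | σ]` on the event that `σ` has `k` ones. -/
noncomputable def meanDecrease (J h : ℝ) (N k : ℕ) : ℝ :=
  2 * ((k.choose 2 : ℝ) / N.choose 2 * vacancyProb J h ((k - 1) / N) -
    ((N - k).choose 2 : ℝ) / N.choose 2 * (1 - vacancyProb J h ((k + 1) / N)))

lemma condE2_Msum_sub_eq {J h : ℝ} {σ : Config N} (hσ : wConf N J h σ ≠ 0) :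
    condE2 N J h (fun σ σ' => (Msum σ : ℝ) - (Msum σ' : ℝ)) σ = meanDecrease J h N (Msum σ) := by
  have card_edges : #(cEdges N) = N.choose 2 := by
    rw [cEdges, Fintype.card_product_filter_lt, Fintype.card_fin]
  have card_ones : #{p ∈ cEdges N | p.1 ∈ ASet σ ∧ p.2 ∈ ASet σ} = (Msum σ).choose 2 :=
    card_filter_cEdges _
  have card_zeros : #{p ∈ cEdges N | p.1 ∈ (ASet σ)ᶜ ∧ p.2 ∈ (ASet σ)ᶜ} =
      (N - Msum σ).choose 2 := by
    rw [card_filter_cEdges, card_compl, Fintype.card_fin, Msum]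
  unfold condE2
  rw [sum_congr rfl fun p hp => sum_qCond_mul_Msum_sub hσ (mem_filter.1 hp).2.ne,
    sum_sub_distrib, ← sum_filter, ← sum_filter, sum_const, sum_const, card_edges, card_ones,
    card_zeros, nsmul_eq_mul, nsmul_eq_mul, meanDecrease]
  ring

end ConditionalMoment

section Asymptotics

open scoped NNReal

lemma vacancyProb_mem_Icc (J h : ℝ) {x : ℝ} (hx : x ≤ 1) :
    vacancyProb J h x ∈ Set.Icc (0 : ℝ) 1 := by
  have := sub_nonneg.2 hx
  refine ⟨by unfold vacancyProb; positivity, div_le_one_of_le₀ ?_ (by positivity)⟩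
  exact le_add_of_nonneg_right (exp_pos _).le

lemma exists_lipschitzOnWith_vacancyProb (J h : ℝ) :
    ∃ B, LipschitzOnWith B (vacancyProb J h) (Set.Icc 0 1) := by
  refine ContDiffOn.exists_lipschitzOnWith (n := 1) ?_ one_ne_zero (convex_Icc 0 1) isCompact_Icc
  have denom_ne_zero : ∀ x ∈ Set.Icc (0 : ℝ) 1, (1 - x) + exp (2 * tauFun J h x) ≠ 0 :=
    fun x hx => (add_pos_of_nonneg_of_pos (sub_nonneg.2 hx.2) (exp_pos _)).ne'
  have contDiff_tau : ContDiff ℝ 1 (tauFun J h) := by unfold tauFun; fun_prop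
  unfold vacancyProb
  fun_prop (disch := exact denom_ne_zero)

lemma Lone_eq_vacancyProb (J h : ℝ) {x : ℝ} (hx : x ≤ 1) :
    Lone J h x = 2 * (x ^ 2 * vacancyProb J h x - (1 - x) ^ 2 * (1 - vacancyProb J h x)) := by
  have denom_ne_zero : (1 - x) + exp (2 * tauFun J h x) ≠ 0 :=
    (add_pos_of_nonneg_of_pos (sub_nonneg.2 hx) (exp_pos _)).ne'
  unfold Lone vacancyProb
  field_simp
  ring

lemma abs_choose_two_div_sub_sq_le {k n : ℕ} (hk : k ≤ n) :
    |(k.choose 2 : ℝ) / n.choose 2 - (k / n) ^ 2| ≤ 1 / n := by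
  rcases lt_or_ge n 2 with hn | hn
  · interval_cases n <;> interval_cases k <;> simp
  have hn' : (2 : ℝ) ≤ n := by exact_mod_cast hn
  have hk' : (k : ℝ) ≤ n := by exact_mod_cast hk
  have h1 : 0 < (n : ℝ) - 1 := by linarith
  have : 0 ≤ (n : ℝ) - k := by linarith
  have diff_eq : (k.choose 2 : ℝ) / n.choose 2 - (k / n) ^ 2 =
      -(k * (n - k) / (n ^ 2 * (n - 1))) := by
    rw [Nat.cast_choose_two, Nat.cast_choose_two]
    field_simp
    ring
  rw [diff_eq, abs_neg, abs_of_nonneg (by positivity),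
    div_le_div_iff₀ (by positivity) (by positivity)]
  have : (k : ℝ) * (n - k) ≤ n * (n - 1) := by nlinarith [sq_nonneg ((k : ℝ) - (n - k))]
  nlinarith

lemma abs_choose_two_div_mul_sub_sq_mul_le {f : ℝ → ℝ} {A : ℝ} {B : ℝ≥0}
    (hfA : ∀ x ∈ Set.Icc (0 : ℝ) 1, |f x| ≤ A) (hfB : LipschitzOnWith B f (Set.Icc 0 1))
    {k n : ℕ} (hk : k ≤ n) :
    |(k.choose 2 : ℝ) / n.choose 2 * f ((k - 1) / n) - (k / n) ^ 2 * f (k / n)| ≤ (A + B) / n := by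
  have hA : 0 ≤ A := (abs_nonneg _).trans (hfA 0 (by simp))
  rcases k.eq_zero_or_pos with rfl | hk0
  · rw [Nat.choose_zero_succ, Nat.cast_zero, zero_div, zero_mul, zero_div, zero_pow two_ne_zero,
      zero_mul, sub_self, abs_zero]
    positivity
  have hn : (0 : ℝ) < n := by exact_mod_cast hk0.trans_le hk
  have hk1 : (1 : ℝ) ≤ k := by exact_mod_cast hk0
  have hkn : (k : ℝ) ≤ n := by exact_mod_cast hk
  have hx : (k : ℝ) / n ∈ Set.Icc (0 : ℝ) 1 := ⟨by positivity, (div_le_one hn).2 hkn⟩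
  have hy : ((k : ℝ) - 1) / n ∈ Set.Icc (0 : ℝ) 1 :=
    ⟨div_nonneg (by linarith) hn.le, (div_le_one hn).2 (by linarith)⟩
  have shift : |f ((k - 1) / n) - f (k / n)| ≤ B * (1 / n) := by
    have h := hfB.dist_le_mul _ hy _ hx
    rwa [Real.dist_eq, Real.dist_eq, ← sub_div, sub_sub_cancel_left, neg_div, abs_neg,
      abs_of_pos (one_div_pos.2 hn)] at h
  have hsq : |((k : ℝ) / n) ^ 2| ≤ 1 := by
    rw [abs_of_nonneg (sq_nonneg _)]
    exact pow_le_one₀ hx.1 hx.2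
  calc |(k.choose 2 : ℝ) / n.choose 2 * f ((k - 1) / n) - (k / n) ^ 2 * f (k / n)|
      = |((k.choose 2 : ℝ) / n.choose 2 - (k / n) ^ 2) * f ((k - 1) / n) +
          (k / n) ^ 2 * (f ((k - 1) / n) - f (k / n))| := by ring_nf
    _ ≤ |(k.choose 2 : ℝ) / n.choose 2 - (k / n) ^ 2| * |f ((k - 1) / n)| +
          |((k : ℝ) / n) ^ 2| * |f ((k - 1) / n) - f (k / n)| := by
      rw [← abs_mul, ← abs_mul]
      exact abs_add_le _ _
    _ ≤ 1 / n * A + 1 * (B * (1 / n)) := by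
      gcongr
      exacts [abs_choose_two_div_sub_sq_le hk, hfA _ hy]
    _ = (A + B) / n := by ring

lemma lipschitzOnWith_one_sub_comp_one_sub {f : ℝ → ℝ} {B : ℝ≥0}
    (hf : LipschitzOnWith B f (Set.Icc 0 1)) :
    LipschitzOnWith B (fun x => 1 - f (1 - x)) (Set.Icc 0 1) := by
  refine LipschitzOnWith.of_dist_le_mul fun x hx y hy => ?_
  have h := hf.dist_le_mul _ (Set.Icc.one_sub_mem hx) _ (Set.Icc.one_sub_mem hy)
  rwa [dist_sub_left] at h ⊢

lemma exists_abs_meanDecrease_sub_Lone_le (J h : ℝ) :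
    ∃ K, ∀ N k : ℕ, 1 ≤ N → k ≤ N → |meanDecrease J h N k - Lone J h (k / N)| ≤ K / N := by
  obtain ⟨B, hB⟩ := exists_lipschitzOnWith_vacancyProb J h
  refine ⟨4 * (1 + B), fun N k hN hk => ?_⟩
  have hN' : (N : ℝ) ≠ 0 := by positivity
  set p := vacancyProb J h with hp
  have hp01 : ∀ x ∈ Set.Icc (0 : ℝ) 1, p x ∈ Set.Icc (0 : ℝ) 1 :=
    fun x hx => vacancyProb_mem_Icc J h hx.2
  have abs_le_one : ∀ y ∈ Set.Icc (0 : ℝ) 1, |y| ≤ 1 :=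
    fun y hy => (abs_of_nonneg hy.1).trans_le hy.2
  have ones := abs_choose_two_div_mul_sub_sq_mul_le (fun x hx => abs_le_one _ (hp01 x hx)) hB hk
  -- The reflection `x ↦ 1 - x`, `k ↦ N - k` brings pairs of zeros to the form of pairs of ones.
  have zeros := abs_choose_two_div_mul_sub_sq_mul_le (k := N - k)
    (fun x hx => abs_le_one _ (Set.Icc.one_sub_mem (hp01 _ (Set.Icc.one_sub_mem hx))))
    (lipschitzOnWith_one_sub_comp_one_sub hB) (N.sub_le k)
  rw [Nat.cast_sub hk, show 1 - ((N : ℝ) - k - 1) / N = (k + 1) / N by field_simp; ring,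
    show ((N : ℝ) - k) / N = 1 - k / N by field_simp, sub_sub_cancel] at zeros
  have hx : (k : ℝ) / N ≤ 1 := div_le_one_of_le₀ (by exact_mod_cast hk) N.cast_nonneg
  rw [meanDecrease, Lone_eq_vacancyProb J h hx, ← hp, ← mul_sub, sub_sub_sub_comm, abs_mul, abs_two]
  calc _ ≤ 2 * ((1 + B : ℝ) / N + (1 + B) / N) := by
        gcongr
        exact (abs_sub _ _).trans (add_le_add ones zeros)
    _ = 4 * (1 + B) / N := by ring

end Asymptotics

theorem stmt5_general (J h : ℝ) :
    ∃ K : ℝ, ∀ N : ℕ, 1 ≤ N →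
      ∃ R₁ : ℝ → ℝ,
        (∀ m ∈ Set.Icc (0:ℝ) 1, |R₁ m| ≤ K / N) ∧
        ∀ σ : Config N, wConf N J h σ ≠ 0 →
          condE2 N J h (fun σ σ' => (Msum σ : ℝ) - (Msum σ' : ℝ)) σ
            = Lone J h (mConf σ) + R₁ (mConf σ) := by
  obtain ⟨K, hK⟩ := exists_abs_meanDecrease_sub_Lone_le J h
  refine ⟨K, fun N hN => ?_⟩
  have hN' : (0 : ℝ) < N := by exact_mod_cast hN
  have density_injective : Function.Injective fun k : ℕ => (k : ℝ) / N :=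
    fun k l hkl => by simpa [hN'.ne'] using hkl
  refine ⟨Function.extend (fun k : ℕ => (k : ℝ) / N)
    (fun k => meanDecrease J h N k - Lone J h (k / N)) 0, fun m hm => ?_, fun σ hσ => ?_⟩
  · by_cases hmk : ∃ k : ℕ, (k : ℝ) / N = m
    · obtain ⟨k, rfl⟩ := hmk
      rw [density_injective.extend_apply]
      exact hK N k hN (by exact_mod_cast (div_le_one hN').1 hm.2)
    · rw [Function.extend_apply' _ _ _ hmk, Pi.zero_apply, abs_zero]
      exact (abs_nonneg _).trans (hK N 0 hN N.zero_le)
  · rw [mConf, density_injective.extend_apply, condE2_Msum_sub_eq hσ, add_sub_cancel]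

/-- First conditional moment of the exchangeable pair for the weighted
Curie–Weiss model: `E[M - M' | σ] = L₁(m(σ)) + R₁(m(σ))` with `|R₁(m)| ≤ K/N` on `[0,1]`,
for a constant `K = K(J,h)` independent of `N`. -/
theorem stmt5 (J h : ℝ) (hJ : 0 ≤ J) :
    ∃ K : ℝ, ∀ N : ℕ, 1 ≤ N →
      ∃ R₁ : ℝ → ℝ,
        (∀ m ∈ Set.Icc (0:ℝ) 1, |R₁ m| ≤ K / N) ∧
        ∀ σ : Config N, wConf N J h σ ≠ 0 →
          condE2 N J h (fun σ σ' => (Msum σ : ℝ) - (Msum σ' : ℝ)) σ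
            = Lone J h (mConf σ) + R₁ (mConf σ) :=
  stmt5_general J h
end
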